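/- Every quantum nilpotent algebra R of dimension N over a field K is a noetherian H-unique factorization domain: R is a noetherian domain and every nonzero H-invariant prime ideal of R contains a prime element that is an H-eigenvector. -/

import Mathlib

open scoped BigOperators

noncomputable section

universe u v

/-- The group of `K`-points of a split torus of rank `r`. -/
abbrev Torus (K : Type u) [Field K] (r : ℕ) : Type u := Fin r → Kˣ

section Core

variable (K : Type u) [Field K] {R : Type v} [Ring R] [Algebra K R] {r N : ℕ}

/-- `a` is an eigenvector of the torus action `act` with (integral) character `f`. -/
def IsEigenWith (act : Torus K r →* (R ≃ₐ[K] R)) (f : Fin r → ℤ) (a : R) : Prop :=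
  ∀ ξ : Torus K r, act ξ a = ((∏ i, ξ i ^ f i : Kˣ) : K) • a

/-- The torus action `act` is rational: every element is a finite sum of
eigenvectors whose eigenvalues are given by integral characters of the torus. -/
def IsRationalAction (act : Torus K r →* (R ≃ₐ[K] R)) : Prop :=
  ∀ a : R, ∃ (s : Finset (Fin r → ℤ)) (c : (Fin r → ℤ) → R),
    a = ∑ f ∈ s, c f ∧ ∀ f ∈ s, IsEigenWith K act f (c f)

/-- The ordered monomial `x 0 ^ m 0 * x 1 ^ m 1 * ⋯ * x (N-1) ^ m (N-1)`. -/
def ordMonomial (x : Fin N → R) (m : Fin N → ℕ) : R :=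
  ((List.finRange N).map fun k => x k ^ m k).prod

/-- The ordered monomial in the reversed order of the generators. -/
def revOrdMonomial (x : Fin N → R) (m : Fin N → ℕ) : R :=
  ((List.finRange N).reverse.map fun k => x k ^ m k).prod

/-- The subalgebra generated by the first `m` of the elements `x 0, …, x (N-1)`. -/
def Rsub (x : Fin N → R) (m : ℕ) : Subalgebra K R :=
  Algebra.adjoin K (x '' {l : Fin N | (l : ℕ) < m})

/-- The subalgebra generated by the elements `x l` with `m < l` (for the reversed order). -/
def RsubRev (x : Fin N → R) (m : ℕ) : Subalgebra K R :=
  Algebra.adjoin K (x '' {l : Fin N | m < (l : ℕ)})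

/-- The skew derivation `δ_k : a ↦ x_k a − (h_k · a) x_k` attached to the `k`-th generator. -/
def skewDelta (act : Torus K r →* (R ≃ₐ[K] R)) (x : Fin N → R) (h : Fin N → Torus K r)
    (k : Fin N) : R → R :=
  fun a => x k * a - act (h k) a * x k

end Core

/-- A quantum nilpotent algebra (CGL extension) of dimension `N`:  an iterated skew
polynomial extension `R = K[x_1][x_2; σ_2, δ_2]⋯[x_N; σ_N, δ_N]` equipped with a rational
action of a torus `H = (Kˣ)^r` by `K`-algebra automorphisms such that the `x_k` are
`H`-eigenvectors, each `δ_k` is a locally nilpotent `σ_k`-derivation of the subalgebra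
generated by `x_1, …, x_{k-1}`, and each `σ_k` is given by the action of a torus element
`h_k` whose eigenvalue `λ_k` on `x_k` is not a root of unity.  The iterated skew polynomial
presentation is encoded by the generation, linear independence of ordered monomials
(PBW basis) and the skew commutation conditions. -/
structure QNA (K : Type u) [Field K] (R : Type v) [Ring R] [Algebra K R] (N r : ℕ) where
  x : Fin N → R
  act : Torus K r →* (R ≃ₐ[K] R)
  h : Fin N → Torus K r
  lam : Fin N → K
  rational : IsRationalAction K act
  gen : Algebra.adjoin K (Set.range x) = ⊤
  pbw : LinearIndependent K (ordMonomial (R := R) x)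
  eigenvec : ∀ k : Fin N, ∃ f : Fin r → ℤ, IsEigenWith K act f (x k)
  stable : ∀ k : Fin N, ∀ a ∈ Rsub K x (k : ℕ), skewDelta K act x h k a ∈ Rsub K x (k : ℕ)
  locnil : ∀ k : Fin N, ∀ a ∈ Rsub K x (k : ℕ), ∃ n : ℕ, (skewDelta K act x h k)^[n] a = 0
  hx : ∀ k, act (h k) (x k) = lam k • x k
  lam_not_root : ∀ k, ∀ n : ℕ, n ≠ 0 → lam k ^ n ≠ 1

/-- A symmetric quantum nilpotent algebra: a quantum nilpotent algebra which admits an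
iterated skew polynomial presentation, satisfying the same axioms, also for the reversed
order `x_N, x_{N-1}, …, x_1` of the generators, with respect to torus elements `h*_k`. -/
structure SymQNA (K : Type u) [Field K] (R : Type v) [Ring R] [Algebra K R] (N r : ℕ)
    extends QNA K R N r where
  hstar : Fin N → Torus K r
  lamstar : Fin N → K
  pbwRev : LinearIndependent K (revOrdMonomial (R := R) x)
  stableRev : ∀ k : Fin N, ∀ a ∈ RsubRev K x (k : ℕ),
    skewDelta K act x hstar k a ∈ RsubRev K x (k : ℕ)
  locnilRev : ∀ k : Fin N, ∀ a ∈ RsubRev K x (k : ℕ),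
    ∃ n : ℕ, (skewDelta K act x hstar k)^[n] a = 0
  hxstar : ∀ k, act (hstar k) (x k) = lamstar k • x k
  lamstar_not_root : ∀ k, ∀ n : ℕ, n ≠ 0 → lamstar k ^ n ≠ 1

section Prime

variable (K : Type u) [Field K] {R : Type v} [Ring R] [Algebra K R] {r N : ℕ}

/-- The skew derivation `δ_k` of the `k`-th step of the presentation vanishes. -/
def deltaZero (Q : QNA K R N r) (k : Fin N) : Prop :=
  ∀ a ∈ Rsub K Q.x (k : ℕ), skewDelta K Q.act Q.x Q.h k a = 0

/-- `p` is a prime element of the subalgebra `A`:  `p` is a nonzero noninvertible normal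
element of `A` (`pA = Ap`) such that `A/Ap` is a domain. -/
def IsPrimeIn (A : Subalgebra K R) (p : R) : Prop :=
  p ∈ A ∧ p ≠ 0 ∧ (¬ ∃ u ∈ A, p * u = 1 ∧ u * p = 1) ∧
  (∀ a ∈ A, ∃ b ∈ A, a * p = p * b) ∧
  (∀ a ∈ A, ∃ b ∈ A, p * a = b * p) ∧
  (∀ a ∈ A, ∀ b ∈ A, (∃ d ∈ A, a * b = p * d) → (∃ d ∈ A, a = p * d) ∨ (∃ d ∈ A, b = p * d))

/-- The predecessor function of the level sets of `η`:  `p(k)` is the largest `l < k`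
with `η l = η k`, and `⊥` (i.e. `−∞`) if there is no such `l`. -/
def predIdx {α : Type*} [DecidableEq α] (η : Fin N → α) (k : Fin N) : WithBot (Fin N) :=
  (Finset.univ.filter fun l => l < k ∧ η l = η k).max

/-- The successor function of the level sets of `η`:  `s(k)` is the smallest `l > k`
with `η l = η k`, and `⊤` (i.e. `+∞`) if there is no such `l`. -/
def succIdx {α : Type*} [DecidableEq α] (η : Fin N → α) (k : Fin N) : WithTop (Fin N) :=
  (Finset.univ.filter fun l => k < l ∧ η l = η k).min

/-- `(η, c, y)` is a sequence of homogeneous prime elements for the quantum nilpotent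
algebra `Q` in the sense of the prime element theorem:  `y` is defined by the recursion
`y_k = y_{p(k)} x_k − c_k` (if `δ_k ≠ 0`; `y_k = x_k` if `δ_k = 0`), the `y_k` are
`H`-eigenvectors, and for every `k` the homogeneous prime elements of the subalgebra
`R_k` generated by `x_1, …, x_k` are precisely the nonzero scalar multiples of the
`y_l` with `l ≤ k` and `s(l) > k`. -/
structure IsPrimeSeq (Q : QNA K R N r) (η : Fin N → ℤ) (c : Fin N → R) (y : Fin N → R) :
    Prop where
  c_mem : ∀ k : Fin N, ¬ deltaZero K Q k → c k ∈ Rsub K Q.x (k : ℕ)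
  rec_delta_zero : ∀ k : Fin N, deltaZero K Q k → y k = Q.x k
  rec_delta_ne : ∀ k : Fin N, ¬ deltaZero K Q k →
    y k = (WithBot.recBotCoe (1 : R) (fun l => y l) (predIdx η k)) * Q.x k - c k
  homog : ∀ k : Fin N, ∃ f : Fin r → ℤ, IsEigenWith K Q.act f (y k)
  prime_iff : ∀ k : Fin N, ∀ u : R,
    (IsPrimeIn K (Rsub K Q.x ((k : ℕ) + 1)) u ∧ ∃ f : Fin r → ℤ, IsEigenWith K Q.act f u) ↔
    (∃ l : Fin N, l ≤ k ∧ (∀ l' : Fin N, l < l' → l' ≤ k → η l' ≠ η l) ∧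
      ∃ t : Kˣ, u = (t : K) • y l)

/-- The vector `ē_k = e_k + e_{p(k)} + e_{p²(k)} + ⋯ ∈ ℤ^N`. -/
def ebar (η : Fin N → ℤ) (k : Fin N) : Fin N → ℤ :=
  fun l => if l ≤ k ∧ η l = η k then 1 else 0

/-- The multiplicatively skewsymmetric matrix of eigenvalues:  `1` on the diagonal,
`λ_{kl}` below it and `λ_{lk}⁻¹` above it. -/
def omegaEntry (lam2 : Fin N → Fin N → Kˣ) (k l : Fin N) : Kˣ :=
  if k = l then 1 else if l < k then lam2 k l else (lam2 l k)⁻¹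

/-- The unique group bicharacter `Ω : ℤ^N × ℤ^N → Kˣ` with `Ω(e_k, e_l)` equal to `1`,
`λ_{kl}`, `λ_{lk}⁻¹` according as `k = l`, `k > l`, `k < l`. -/
def Omega (lam2 : Fin N → Fin N → Kˣ) (f g : Fin N → ℤ) : Kˣ :=
  ∏ k, ∏ l, (omegaEntry K lam2 k l) ^ (f k * g l)

/-- The set of exchangeable indices: those `k` with `s(k) ≠ +∞`. -/
def exSet (η : Fin N → ℤ) : Finset (Fin N) :=
  Finset.univ.filter fun k => ∃ l, k < l ∧ η l = η k

/-- Condition (A): `K` contains square roots of the scalars `λ_{kl}` such that the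
subgroup of `Kˣ` generated by all of them contains no elements of order 2. -/
def CondA (lam2 : Fin N → Fin N → Kˣ) : Prop :=
  ∃ sq : Fin N → Fin N → Kˣ, (∀ k l : Fin N, l < k → sq k l ^ 2 = lam2 k l) ∧
    ∀ g ∈ Subgroup.closure {u : Kˣ | ∃ k l : Fin N, l < k ∧ u = sq k l}, g ^ 2 = 1 → g = 1

/-- Condition (B): there exist positive integers `d_n`, `n ∈ range η`, such that
`(λ*_k)^{d_{η(l)}} = (λ*_l)^{d_{η(k)}}` for all exchangeable `k, l`. -/
def CondB (η : Fin N → ℤ) (lamstar : Fin N → K) : Prop :=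
  ∃ d : ℤ → ℕ, (∀ n ∈ Set.range η, 0 < d n) ∧
    ∀ k ∈ exSet η, ∀ l ∈ exSet η, lamstar k ^ d (η l) = lamstar l ^ d (η k)

/-- The defining conditions for the exchange matrix `B̃ ∈ M_{N×ex}(ℤ)`:  columns indexed
outside `ex` vanish; `Ω(Σ_l b_{lk} ē_l, ē_n)` equals `λ*_n` for `k = n` and `1` otherwise;
and the products `y_1^{b_{1k}} ⋯ y_N^{b_{Nk}}` are fixed under `H`, i.e. the characters
`χ_{y_l}` of the `y_l` satisfy `Σ_l b_{lk} χ_{y_l} = 0`. -/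
def IsExchangeMatrix (lam2 : Fin N → Fin N → Kˣ) (η : Fin N → ℤ) (lamstar : Fin N → K)
    (chiy : Fin N → Fin r → ℤ) (B : Fin N → Fin N → ℤ) : Prop :=
  (∀ k : Fin N, k ∉ exSet η → ∀ l, B l k = 0) ∧
  (∀ k ∈ exSet η, ∀ n : Fin N,
    ((Omega K lam2 (fun j => ∑ l, B l k * ebar η l j) (ebar η n) : Kˣ) : K) =
      (if k = n then lamstar n else 1)) ∧
  (∀ k ∈ exSet η, ∀ i : Fin r, (∑ l, B l k * chiy l i) = 0)

/-- `ι : R →ₐ[K] D` realizes the division ring `D` as the division ring of fractions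
`Fract R`:  `ι` is injective and every element of `D` is a right fraction `ι(a) ι(b)⁻¹`. -/
def IsFractionEmb {D : Type v} [DivisionRing D] [Algebra K D] (ι : R →ₐ[K] D) : Prop :=
  Function.Injective ι ∧ ∀ d : D, ∃ a b : R, b ≠ 0 ∧ d * ι b = ι a

end Prime
section UFD

variable (K : Type u) [Field K] {R : Type v} [Ring R] [Algebra K R] {r N : ℕ}

/-- A two-sided ideal `P` of `R` is prime: `P ≠ R` and `a R b ⊆ P` implies
`a ∈ P` or `b ∈ P`. -/
def TwoSidedIdeal.IsPrimeTS (P : TwoSidedIdeal R) : Prop :=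
  P ≠ ⊤ ∧ ∀ a b : R, (∀ t : R, a * t * b ∈ P) → a ∈ P ∨ b ∈ P

/-- A two-sided ideal is `H`-invariant for the torus action `act`. -/
def TwoSidedIdeal.IsHInvariant (act : Torus K r →* (R ≃ₐ[K] R)) (P : TwoSidedIdeal R) :
    Prop :=
  ∀ ξ : Torus K r, ∀ a ∈ P, act ξ a ∈ P

end UFD


section OreBasics
variable {K : Type u} [Field K] {M : Type v} [Ring M] [Algebra K M]

/-- Polynomials in `x` of degree `< n` with left coefficients in `A`. -/
def LTn (A : Subalgebra K M) (x : M) (n : ℕ) : Submodule K M where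
  carrier := {f | ∃ a : ℕ → M, (∀ i, a i ∈ A) ∧ f = ∑ i ∈ Finset.range n, a i * x ^ i}
  zero_mem' := ⟨fun _ => 0, fun _ => A.zero_mem, by simp⟩
  add_mem' := by
    rintro f g ⟨a, ha, rfl⟩ ⟨b, hb, rfl⟩
    exact ⟨fun i => a i + b i, fun i => A.add_mem (ha i) (hb i), by
      simp [add_mul, Finset.sum_add_distrib]⟩
  smul_mem' := by
    rintro c f ⟨a, ha, rfl⟩
    exact ⟨fun i => c • a i, fun i => A.smul_mem (ha i) c, by simp [Finset.smul_sum]⟩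

/-- One step of an iterated Ore extension, inside an ambient ring. -/
structure OreStep (A B : Subalgebra K M) (x : M) (σ : M ≃ₐ[K] M) : Prop where
  le : A ≤ B
  xmem : x ∈ B
  sig : ∀ a ∈ A, σ a ∈ A
  sigs : ∀ a ∈ A, σ.symm a ∈ A
  del : ∀ a ∈ A, x * a - σ a * x ∈ A
  span : ∀ b ∈ B, ∃ n, b ∈ LTn A x n
  indep : ∀ (n : ℕ) (a : ℕ → M), (∀ i, a i ∈ A) → ∑ i ∈ Finset.range n, a i * x ^ i = 0 →
    ∀ i < n, a i = 0

variable {A B : Subalgebra K M} {x : M} {σ : M ≃ₐ[K] M}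

theorem LTn_zero {f : M} (h : f ∈ LTn A x 0) : f = 0 := by
  obtain ⟨a, _, rfl⟩ := h; simp

theorem mem_LTn_succ {n : ℕ} {f : M} :
    f ∈ LTn A x (n+1) ↔ ∃ f' ∈ LTn A x n, ∃ a ∈ A, f = f' + a * x ^ n := by
  constructor
  · rintro ⟨a, ha, rfl⟩
    exact ⟨_, ⟨a, ha, rfl⟩, a n, ha n, by rw [Finset.sum_range_succ]⟩
  · rintro ⟨f', ⟨a, ha, rfl⟩, b, hb, rfl⟩
    refine ⟨fun i => if i = n then b else a i, fun i => ?_, ?_⟩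
    · dsimp only; split_ifs; exacts [hb, ha i]
    · rw [Finset.sum_range_succ]
      congr 1
      · apply Finset.sum_congr rfl
        intro i hi
        simp only [if_neg (Finset.mem_range.1 hi).ne]
      · simp

theorem LTn_mono {n m : ℕ} (h : n ≤ m) {f : M} (hf : f ∈ LTn A x n) : f ∈ LTn A x m := by
  induction h with
  | refl => exact hf
  | step _ ih => exact mem_LTn_succ.2 ⟨f, ih, 0, A.zero_mem, by simp⟩

theorem term_mem_LTn {n : ℕ} {a : M} (ha : a ∈ A) : a * x ^ n ∈ LTn A x (n+1) :=
  mem_LTn_succ.2 ⟨0, Submodule.zero_mem _, a, ha, by simp⟩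

theorem LTn_mul_left {n : ℕ} {a f : M} (ha : a ∈ A) (hf : f ∈ LTn A x n) :
    a * f ∈ LTn A x n := by
  obtain ⟨b, hb, rfl⟩ := hf
  exact ⟨fun i => a * b i, fun i => A.mul_mem ha (hb i), by simp [Finset.mul_sum, mul_assoc]⟩

theorem LTn_mul_x {n : ℕ} {f : M} (hf : f ∈ LTn A x n) : f * x ∈ LTn A x (n+1) := by
  induction n generalizing f with
  | zero => rw [LTn_zero hf]; simp
  | succ n ih =>
    obtain ⟨f', hf', a, ha, rfl⟩ := mem_LTn_succ.1 hf
    rw [add_mul, mul_assoc, ← pow_succ]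
    exact Submodule.add_mem _ (LTn_mono (by omega) (ih hf')) (term_mem_LTn ha)

theorem LTn_mul_xpow {n m : ℕ} {f : M} (hf : f ∈ LTn A x n) : f * x ^ m ∈ LTn A x (n+m) := by
  induction m with
  | zero => simpa using hf
  | succ m ih => rw [pow_succ, ← mul_assoc]; exact LTn_mul_x ih

namespace OreStep


theorem LTn_le (H : OreStep A B x σ) {n : ℕ} {f : M} (hf : f ∈ LTn A x n) : f ∈ B := by
  obtain ⟨a, ha, rfl⟩ := hf
  exact B.sum_mem fun i _ => B.mul_mem (H.le (ha i)) (B.pow_mem H.xmem i)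

theorem sigpow (H : OreStep A B x σ) (n : ℕ) {a : M} (ha : a ∈ A) : (σ ^ n) a ∈ A := by
  induction n with
  | zero => simpa using ha
  | succ n ih => rw [pow_succ', AlgEquiv.mul_apply]; exact H.sig _ ih

theorem sigpow_symm (H : OreStep A B x σ) (n : ℕ) {a : M} (ha : a ∈ A) : (σ ^ n).symm a ∈ A := by
  induction n generalizing a with
  | zero => change a ∈ A; exact ha
  | succ n ih =>
    have : (σ ^ (n+1)).symm a = (σ ^ n).symm (σ.symm a) := by
      apply (σ ^ (n+1)).injective
      rw [AlgEquiv.apply_symm_apply, pow_succ', AlgEquiv.mul_apply, AlgEquiv.apply_symm_apply,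
        AlgEquiv.apply_symm_apply]
    rw [this]; exact ih (H.sigs _ ha)

theorem x_mul_LTn (H : OreStep A B x σ) {n : ℕ} {f : M} (hf : f ∈ LTn A x n) : x * f ∈ LTn A x (n+1) := by
  induction n generalizing f with
  | zero => rw [LTn_zero hf]; simp
  | succ n ih =>
    obtain ⟨f', hf', a, ha, rfl⟩ := mem_LTn_succ.1 hf
    have : x * (f' + a * x ^ n) = x * f' + ((x * a - σ a * x) * x ^ n + σ a * x ^ (n+1)) := by
      rw [pow_succ']; noncomm_ring
    rw [this]
    exact Submodule.add_mem _ (LTn_mono (by omega) (ih hf'))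
      (Submodule.add_mem _ (LTn_mono (by omega) (term_mem_LTn (H.del a ha)))
        (term_mem_LTn (H.sig a ha)))

theorem xpow_mul_LTn (H : OreStep A B x σ) {n m : ℕ} {f : M} (hf : f ∈ LTn A x n) : x ^ m * f ∈ LTn A x (n+m) := by
  induction m with
  | zero => simpa using hf
  | succ m ih => rw [pow_succ', mul_assoc]; exact H.x_mul_LTn ih

theorem xpow_mul (H : OreStep A B x σ) {a : M} (ha : a ∈ A) (n : ℕ) :
    x ^ n * a - (σ ^ n) a * x ^ n ∈ LTn A x n := by
  induction n with
  | zero => simp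
  | succ n ih =>
    have h2 := H.sigpow n ha
    have : x ^ (n+1) * a - (σ ^ (n+1)) a * x ^ (n+1) =
      x * (x ^ n * a - (σ ^ n) a * x ^ n) + (x * (σ ^ n) a - σ ((σ ^ n) a) * x) * x ^ n := by
      rw [pow_succ' σ, AlgEquiv.mul_apply, pow_succ']; noncomm_ring
    rw [this]
    exact Submodule.add_mem _ (H.x_mul_LTn ih) (term_mem_LTn (H.del _ h2))

theorem LTn_mul_A (H : OreStep A B x σ) {n : ℕ} {f a : M} (hf : f ∈ LTn A x n) (ha : a ∈ A) : f * a ∈ LTn A x n := by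
  induction n generalizing f with
  | zero => rw [LTn_zero hf]; simp
  | succ n ih =>
    obtain ⟨f', hf', b, hb, rfl⟩ := mem_LTn_succ.1 hf
    have : (f' + b * x ^ n) * a = f' * a + (b * (x ^ n * a - (σ ^ n) a * x ^ n) +
      (b * (σ ^ n) a) * x ^ n) := by noncomm_ring
    rw [this]
    exact Submodule.add_mem _ (LTn_mono (by omega) (ih hf'))
      (Submodule.add_mem _ (LTn_mono (by omega) (LTn_mul_left hb (H.xpow_mul ha n)))
        (term_mem_LTn (A.mul_mem hb (H.sigpow n ha))))

theorem LTn_mul (H : OreStep A B x σ) {n m : ℕ} {f g : M} (hf : f ∈ LTn A x n) (hg : g ∈ LTn A x (m+1)) :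
    f * g ∈ LTn A x (n+m) := by
  induction n generalizing f with
  | zero => rw [LTn_zero hf]; simp
  | succ n ih =>
    obtain ⟨f', hf', b, hb, rfl⟩ := mem_LTn_succ.1 hf
    rw [add_mul, mul_assoc]
    exact Submodule.add_mem _ (LTn_mono (by omega) (ih hf'))
      (LTn_mono (by omega) (LTn_mul_left hb (H.xpow_mul_LTn (m := n) hg)))

theorem lead_mul (H : OreStep A B x σ) {n m : ℕ} {a b f g : M} (ha : a ∈ A) (hb : b ∈ A) (hf : f ∈ LTn A x n)
    (hg : g ∈ LTn A x m) :
    (f + a * x ^ n) * (g + b * x ^ m) - (a * (σ ^ n) b) * x ^ (n + m) ∈ LTn A x (n + m) := by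
  have : (f + a * x ^ n) * (g + b * x ^ m) - (a * (σ ^ n) b) * x ^ (n + m) =
    f * (g + b * x ^ m) + a * (x ^ n * g) + (a * (x ^ n * b - (σ ^ n) b * x ^ n)) * x ^ m := by
    rw [pow_add]; noncomm_ring
  rw [this]
  refine Submodule.add_mem _ (Submodule.add_mem _ ?_ ?_) ?_
  · exact H.LTn_mul hf (mem_LTn_succ.2 ⟨g, hg, b, hb, rfl⟩)
  · exact LTn_mul_left ha (LTn_mono (by omega) (H.xpow_mul_LTn (m := n) hg))
  · exact LTn_mul_xpow (LTn_mul_left ha (H.xpow_mul hb n))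

theorem exists_lead (H : OreStep A B x σ) {b : M} (hb : b ∈ B) (hb0 : b ≠ 0) :
    ∃ n, ∃ f ∈ LTn A x n, ∃ a ∈ A, a ≠ 0 ∧ b = f + a * x ^ n := by
  obtain ⟨n, hn⟩ := H.span b hb
  induction n with
  | zero => exact absurd (LTn_zero hn) hb0
  | succ n ih =>
    obtain ⟨f', hf', a, ha, rfl⟩ := mem_LTn_succ.1 hn
    by_cases h : a = 0
    · exact ih (by simpa [h] using hf')
    · exact ⟨n, f', hf', a, ha, h, rfl⟩

theorem lead_mem (H : OreStep A B x σ) {n : ℕ} {f a : M} (hf : f ∈ LTn A x n) (ha : a ∈ A)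
    (h : f + a * x ^ n ∈ LTn A x n) : a = 0 := by
  have : a * x ^ n ∈ LTn A x n := by simpa using Submodule.sub_mem _ h hf
  obtain ⟨b, hb, hab⟩ := this
  have := H.indep (n+1) (fun i => if i = n then -a else b i) (fun i => by
    split_ifs; exacts [A.neg_mem ha, hb i]) (by
    rw [Finset.sum_range_succ]
    have : ∑ i ∈ Finset.range n, (if i = n then -a else b i) * x ^ i =
      ∑ i ∈ Finset.range n, b i * x ^ i := by
      apply Finset.sum_congr rfl
      intro i hi
      rw [if_neg (Finset.mem_range.1 hi).ne]
    rw [this, ← hab]; simp) n (by omega)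
  simpa using this

theorem lead_ne (H : OreStep A B x σ) {n : ℕ} {f a : M} (hf : f ∈ LTn A x n) (ha : a ∈ A) (ha0 : a ≠ 0) :
    f + a * x ^ n ≠ 0 := fun h => ha0 (H.lead_mem hf ha (by rw [h]; exact Submodule.zero_mem _))

theorem mem_A_of_LTn_one (H : OreStep A B x σ) {f : M} (hf : f ∈ LTn A x 1) : f ∈ A := by
  obtain ⟨f', hf', a, ha, rfl⟩ := mem_LTn_succ.1 hf
  rw [LTn_zero hf']; simpa using ha

theorem dom (H : OreStep A B x σ) (hA : ∀ a ∈ A, ∀ b ∈ A, a * b = 0 → a = 0 ∨ b = 0) :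
    ∀ a ∈ B, ∀ b ∈ B, a * b = 0 → a = 0 ∨ b = 0 := by
  intro a ha b hb hab
  by_contra! hne
  obtain ⟨n, f, hf, a', ha', ha0, rfl⟩ := H.exists_lead ha hne.1
  obtain ⟨m, g, hg, b', hb', hb0, rfl⟩ := H.exists_lead hb hne.2
  have h1 := H.lead_mul ha' hb' hf hg
  rw [hab, zero_sub, Submodule.neg_mem_iff] at h1
  have h2 := H.lead_mem (f := 0) (Submodule.zero_mem _) (A.mul_mem ha' (H.sigpow n hb'))
    (by simpa using h1)
  rcases hA _ ha' _ (H.sigpow n hb') h2 with h | h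
  · exact ha0 h
  · exact hb0 ((map_eq_zero_iff _ (σ ^ n).injective).1 h)

/-- twisted leading coefficient ideals -/
def leadIdeal (H : OreStep A B x σ) (I : Ideal B) (n : ℕ) : Ideal A where
  carrier := {a | ∃ f ∈ LTn A x n, ∃ b ∈ I, (b : M) = f + (σ ^ n) (a : M) * x ^ n}
  zero_mem' := ⟨0, Submodule.zero_mem _, 0, I.zero_mem, by simp⟩
  add_mem' := by
    rintro a a' ⟨f, hf, b, hb, h⟩ ⟨f', hf', b', hb', h'⟩
    refine ⟨f + f', Submodule.add_mem _ hf hf', b + b', I.add_mem hb hb', ?_⟩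
    push_cast
    rw [h, h', map_add, add_mul]; abel
  smul_mem' := by
    rintro c a ⟨f, hf, b, hb, h⟩
    have hc := H.sigpow n c.2
    refine ⟨(σ ^ n) c * f, LTn_mul_left hc hf, ⟨(σ ^ n) c, H.le hc⟩ * b, I.mul_mem_left _ hb, ?_⟩
    push_cast
    rw [h, smul_eq_mul, mul_add, Subalgebra.coe_mul, map_mul, mul_assoc]

theorem leadIdeal_mono (H : OreStep A B x σ) {I J : Ideal B} (hIJ : I ≤ J) (n : ℕ) :
    H.leadIdeal I n ≤ H.leadIdeal J n := by
  rintro a ⟨f, hf, b, hb, h⟩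
  exact ⟨f, hf, b, hIJ hb, h⟩

theorem leadIdeal_succ (H : OreStep A B x σ) (I : Ideal B) (n : ℕ) :
    H.leadIdeal I n ≤ H.leadIdeal I (n+1) := by
  rintro a ⟨f, hf, b, hb, h⟩
  have h2 := H.sigpow n a.2
  refine ⟨x * f + (x * (σ ^ n) a - σ ((σ ^ n) a) * x) * x ^ n, ?_, ⟨x, H.xmem⟩ * b,
    I.mul_mem_left _ hb, ?_⟩
  · exact Submodule.add_mem _ (H.x_mul_LTn hf) (term_mem_LTn (H.del _ h2))
  · push_cast
    rw [h, pow_succ' σ, AlgEquiv.mul_apply, pow_succ']; noncomm_ring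

theorem leadIdeal_mono2 (H : OreStep A B x σ) (I : Ideal B) {n m : ℕ} (h : n ≤ m) :
    H.leadIdeal I n ≤ H.leadIdeal I m := by
  induction h with
  | refl => exact le_rfl
  | step _ ih => exact ih.trans (H.leadIdeal_succ I _)

theorem leadIdeal_eq (H : OreStep A B x σ) {I J : Ideal B} (hIJ : I ≤ J)
    (h : ∀ n, H.leadIdeal J n ≤ H.leadIdeal I n) : J ≤ I := by
  have key : ∀ n, ∀ b : B, (b : M) ∈ LTn A x n → b ∈ J → b ∈ I := by
    intro n
    induction n with
    | zero =>
      intro b hb _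
      have : b = 0 := Subtype.ext (LTn_zero hb)
      rw [this]; exact I.zero_mem
    | succ n ih =>
      intro b hb hbJ
      obtain ⟨f, hf, a, ha, hfa⟩ := mem_LTn_succ.1 hb
      have hmem : (⟨(σ ^ n).symm a, H.sigpow_symm n ha⟩ : A) ∈ H.leadIdeal J n :=
        ⟨f, hf, b, hbJ, by simpa using hfa⟩
      obtain ⟨f', hf', b', hb', h'⟩ := h n hmem
      simp only [AlgEquiv.apply_symm_apply] at h'
      have : b - b' ∈ I := by
        apply ih _ _ (J.sub_mem hbJ (hIJ hb'))
        push_cast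
        rw [hfa, h']
        simpa using Submodule.sub_mem _ hf hf'
      simpa using I.add_mem this hb'
  intro b hb
  obtain ⟨n, hn⟩ := H.span b b.2
  exact key n b hn hb

theorem noeth (H : OreStep A B x σ) (hA : IsNoetherianRing A) : IsNoetherianRing B := by
  rw [isNoetherianRing_iff, ← monotone_stabilizes_iff_noetherian]
  intro I
  have hA' := monotone_stabilizes_iff_noetherian.2 (isNoetherianRing_iff.1 hA)
  obtain ⟨n0, h0⟩ := hA' ⟨fun n => H.leadIdeal (I n) n, fun n m h =>
    (H.leadIdeal_mono (I.monotone h) n).trans (H.leadIdeal_mono2 _ h)⟩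
  have h1 : ∀ n, ∃ k, ∀ m, k ≤ m → H.leadIdeal (I k) n = H.leadIdeal (I m) n := fun n =>
    hA' ⟨fun k => H.leadIdeal (I k) n, fun k m h => H.leadIdeal_mono (I.monotone h) n⟩
  choose k hk using h1
  refine ⟨n0 + ∑ n ∈ Finset.range n0, k n, fun m hm => le_antisymm (I.monotone hm) ?_⟩
  apply H.leadIdeal_eq (I.monotone hm)
  intro n
  by_cases hn : n < n0
  · have hkn : k n ≤ n0 + ∑ n ∈ Finset.range n0, k n :=
      (Finset.single_le_sum (f := k) (fun _ _ => Nat.zero_le _)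
        (Finset.mem_range.2 hn)).trans (Nat.le_add_left _ _)
    rw [← hk n _ hkn, ← hk n m (hkn.trans hm)]
  · push Not at hn
    have e1 := h0 (max n m) (le_trans hn (le_max_left _ _))
    have e2 : H.leadIdeal (I m) n ≤ H.leadIdeal (I (max n m)) (max n m) :=
      (H.leadIdeal_mono (I.monotone (le_max_right n m)) n).trans
        (H.leadIdeal_mono2 _ (le_max_left _ _))
    refine e2.trans ?_
    change H.leadIdeal (I n0) n0 = H.leadIdeal (I (max n m)) (max n m) at e1
    rw [← e1]
    exact (H.leadIdeal_mono (I.monotone (Nat.le_add_right _ _)) n0).trans (H.leadIdeal_mono2 _ hn)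

end OreStep
end OreBasics


section FromQNA
variable {K : Type u} [Field K] {R : Type v} [Ring R] [Algebra K R] {N r : ℕ}

theorem prod_update_aux (x : Fin N → R) (m : Fin N → ℕ) (k : Fin N) (i : ℕ)
    (hm : ∀ l, k ≤ l → m l = 0) (L : List (Fin N)) (hL : L.Pairwise (· < ·)) :
    k ∈ L → (L.map fun l => x l ^ m l).prod * x k ^ i =
      (L.map fun l => x l ^ (Function.update m k i) l).prod := by
  induction L with
  | nil => simp
  | cons a L ih =>
    intro hk
    rw [List.pairwise_cons] at hL
    simp only [List.map_cons, List.prod_cons]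
    rcases List.mem_cons.1 hk with h | h
    · subst h
      have e1 : (L.map fun l => x l ^ m l).prod = 1 := by
        apply List.prod_eq_one
        intro y hy
        obtain ⟨l, hl, rfl⟩ := List.mem_map.1 hy
        rw [hm l (hL.1 l hl).le, pow_zero]
      have e2 : (L.map fun l => x l ^ (Function.update m k i) l).prod = 1 := by
        apply List.prod_eq_one
        intro y hy
        obtain ⟨l, hl, rfl⟩ := List.mem_map.1 hy
        simp only [Function.update_of_ne (hL.1 l hl).ne', hm l (hL.1 l hl).le, pow_zero]
      rw [e1, e2, hm k le_rfl]; simp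
    · have hak : a < k := hL.1 k h
      rw [mul_assoc, ih hL.2 h, Function.update_of_ne hak.ne]

theorem ordMonomial_update (x : Fin N → R) (m : Fin N → ℕ) (k : Fin N) (i : ℕ)
    (hm : ∀ l, k ≤ l → m l = 0) :
    ordMonomial x m * x k ^ i = ordMonomial x (Function.update m k i) :=
  prod_update_aux x m k i hm _ (List.pairwise_lt_finRange N) (List.mem_finRange k)

variable (Q : QNA K R N r)

theorem Rsub_act (n : ℕ) (ξ : Torus K r) {a : R} (ha : a ∈ Rsub K Q.x n) :
    Q.act ξ a ∈ Rsub K Q.x n := by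
  induction ha using Algebra.adjoin_induction with
  | mem y hy =>
    obtain ⟨l, hl, rfl⟩ := hy
    obtain ⟨f, hf⟩ := Q.eigenvec l
    rw [hf ξ]
    exact Subalgebra.smul_mem _ (Algebra.subset_adjoin (Set.mem_image_of_mem _ hl)) _
  | algebraMap c => rw [AlgEquiv.commutes]; exact Subalgebra.algebraMap_mem _ _
  | add a b _ _ ha hb => rw [map_add]; exact Subalgebra.add_mem _ ha hb
  | mul a b _ _ ha hb => rw [map_mul]; exact Subalgebra.mul_mem _ ha hb

theorem Rsub_mono {n m : ℕ} (h : n ≤ m) : Rsub K Q.x n ≤ Rsub K Q.x m :=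
  Algebra.adjoin_mono (Set.image_mono fun _ hl => lt_of_lt_of_le hl h)

theorem Rsub_span (k : Fin N) {b : R} (hb : b ∈ Rsub K Q.x ((k : ℕ) + 1)) :
    ∃ n, b ∈ LTn (Rsub K Q.x k) (Q.x k) n := by
  have hx : ∀ n f, f ∈ LTn (Rsub K Q.x k) (Q.x k) n →
      Q.x k * f ∈ LTn (Rsub K Q.x k) (Q.x k) (n+1) := by
    intro n
    induction n with
    | zero => intro f hf; rw [LTn_zero hf]; simp
    | succ n ih =>
      intro f hf
      obtain ⟨f', hf', a, ha, rfl⟩ := mem_LTn_succ.1 hf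
      have : Q.x k * (f' + a * Q.x k ^ n) = Q.x k * f' + (skewDelta K Q.act Q.x Q.h k a * Q.x k ^ n
        + Q.act (Q.h k) a * Q.x k ^ (n+1)) := by
        rw [pow_succ', skewDelta]; noncomm_ring
      rw [this]
      exact Submodule.add_mem _ (LTn_mono (by omega) (ih _ hf'))
        (Submodule.add_mem _ (LTn_mono (by omega) (term_mem_LTn (Q.stable k a ha)))
          (term_mem_LTn (Rsub_act Q _ _ ha)))
  have key : ∀ n f, f ∈ LTn (Rsub K Q.x k) (Q.x k) n → ∃ m, b * f ∈ LTn (Rsub K Q.x k) (Q.x k) m := by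
    induction hb using Algebra.adjoin_induction with
    | mem y hy =>
      obtain ⟨l, hl, rfl⟩ := hy
      intro n f hf
      rcases Nat.lt_succ_iff_lt_or_eq.1 hl with h | h
      · exact ⟨n, LTn_mul_left (Algebra.subset_adjoin ⟨l, h, rfl⟩) hf⟩
      · rw [Fin.ext h]; exact ⟨n+1, hx n f hf⟩
    | algebraMap c =>
      intro n f hf
      exact ⟨n, LTn_mul_left (Subalgebra.algebraMap_mem _ _) hf⟩
    | add a b _ _ ha hb =>
      intro n f hf
      obtain ⟨m1, h1⟩ := ha n f hf
      obtain ⟨m2, h2⟩ := hb n f hf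
      exact ⟨max m1 m2, by
        rw [add_mul]
        exact Submodule.add_mem _ (LTn_mono (le_max_left _ _) h1) (LTn_mono (le_max_right _ _) h2)⟩
    | mul a b _ _ ha hb =>
      intro n f hf
      obtain ⟨m2, h2⟩ := hb n f hf
      obtain ⟨m1, h1⟩ := ha _ _ h2
      exact ⟨m1, by rwa [mul_assoc]⟩
  have := key 1 1 (mem_LTn_succ.2 ⟨0, Submodule.zero_mem _, 1, Subalgebra.one_mem _, by simp⟩)
  simpa using this

theorem Rsub_zero {a : R} (ha : a ∈ Rsub K Q.x 0) : ∃ c : K, a = algebraMap K R c := by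
  have : Rsub K Q.x 0 = ⊥ := by simp [Rsub]
  rw [this, Algebra.mem_bot] at ha
  obtain ⟨c, rfl⟩ := ha
  exact ⟨c, rfl⟩

theorem Rsub_le_span (n : ℕ) (hn : n ≤ N) {a : R} (ha : a ∈ Rsub K Q.x n) :
    a ∈ Submodule.span K (ordMonomial (R := R) Q.x '' {m | ∀ l : Fin N, n ≤ (l : ℕ) → m l = 0}) := by
  induction n generalizing a with
  | zero =>
    obtain ⟨c, rfl⟩ := Rsub_zero Q ha
    rw [Algebra.algebraMap_eq_smul_one]
    apply Submodule.smul_mem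
    apply Submodule.subset_span
    exact ⟨0, by simp, by simp [ordMonomial]⟩
  | succ n ih =>
    obtain ⟨d, c, hc, rfl⟩ := Rsub_span Q ⟨n, hn⟩ ha
    apply Submodule.sum_mem
    intro i _
    have := ih (by omega) (hc i)
    generalize c i = y at this
    induction this using Submodule.span_induction with
    | mem y hy =>
      obtain ⟨m, hm, rfl⟩ := hy
      rw [ordMonomial_update Q.x m ⟨n, hn⟩ i (fun l hl => hm l hl)]
      apply Submodule.subset_span
      refine ⟨_, fun l hl => ?_, rfl⟩
      rw [Function.update_of_ne, hm l (by omega)]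
      intro h; rw [h] at hl; simp at hl
    | zero => simp
    | add y z _ _ hy hz => rw [add_mul]; exact Submodule.add_mem _ hy hz
    | smul c y _ hy => rw [smul_mul_assoc]; exact Submodule.smul_mem _ _ hy

theorem Rsub_indep (k : Fin N) (n : ℕ) (a : ℕ → R) (ha : ∀ i, a i ∈ Rsub K Q.x k)
    (h0 : ∑ i ∈ Finset.range n, a i * Q.x k ^ i = 0) : ∀ i < n, a i = 0 := by
  have h1 : ∀ i, ∃ c : (Fin N → ℕ) →₀ K, c ∈ Finsupp.supported K K
      {m : Fin N → ℕ | ∀ l : Fin N, (k : ℕ) ≤ (l : ℕ) → m l = 0} ∧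
      Finsupp.linearCombination K (ordMonomial (R := R) Q.x) c = a i := fun i =>
    (Finsupp.mem_span_image_iff_linearCombination K).1 (Rsub_le_span Q k k.2.le (ha i))
  choose c hc hca using h1
  have h2 : ∀ i, a i * Q.x k ^ i = Finsupp.linearCombination K (ordMonomial (R := R) Q.x)
      ((c i).mapDomain fun m => Function.update m k i) := by
    intro i
    rw [Finsupp.linearCombination_mapDomain, ← hca i, Finsupp.linearCombination_apply,
      Finsupp.linearCombination_apply, Finsupp.sum, Finsupp.sum, Finset.sum_mul]
    apply Finset.sum_congr rfl
    intro m hm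
    rw [smul_mul_assoc, ordMonomial_update Q.x m k i (fun l hl => hc i hm l hl)]
    rfl
  simp only [h2, ← map_sum] at h0
  have h3 := (linearIndependent_iff.1 Q.pbw) _ h0
  intro i0 hi0
  have : c i0 = 0 := by
    ext m
    by_cases hm : m ∈ {m : Fin N → ℕ | ∀ l : Fin N, (k : ℕ) ≤ (l : ℕ) → m l = 0}
    · have h4 := DFunLike.congr_fun h3 (Function.update m k i0)
      rw [Finsupp.finsetSum_apply, Finset.sum_eq_single i0] at h4
      · rw [Finsupp.mapDomain_apply' _ _ (hc i0) _ hm] at h4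
        · exact h4
        · intro m1 h1 m2 h2 h12
          ext l
          by_cases hl : l = k
          · subst hl; rw [h1 l le_rfl, h2 l le_rfl]
          · have := congrFun h12 l
            simpa [Function.update_of_ne hl] using this
      · intro i _ hi
        apply Finsupp.mapDomain_of_notMem_range
        rintro ⟨m', hm'⟩
        have := congrFun hm' k
        simp at this
        exact hi this
      · intro h; exact absurd (Finset.mem_range.2 hi0) h
    · by_contra h
      exact hm (hc i0 (Finsupp.mem_support_iff.2 h))
  rw [← hca i0, this, map_zero]

theorem QNA.oreStep (k : Fin N) :
    OreStep (Rsub K Q.x k) (Rsub K Q.x ((k : ℕ) + 1)) (Q.x k) (Q.act (Q.h k)) where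
  le := Rsub_mono Q (Nat.le_succ _)
  xmem := Algebra.subset_adjoin ⟨k, Nat.lt_succ_self _, rfl⟩
  sig a ha := Rsub_act Q _ _ ha
  sigs a ha := by
    have : (Q.act (Q.h k)).symm = Q.act (Q.h k)⁻¹ := by rw [map_inv]; rfl
    rw [this]; exact Rsub_act Q _ _ ha
  del a ha := Q.stable k a ha
  span b hb := Rsub_span Q k hb
  indep := Rsub_indep Q k

theorem Rsub_top : Rsub K Q.x N = ⊤ := by
  rw [← Q.gen, Rsub]
  congr 1
  ext y; constructor
  · rintro ⟨l, _, rfl⟩; exact ⟨l, rfl⟩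
  · rintro ⟨l, rfl⟩; exact ⟨l, l.2, rfl⟩

theorem QNA.nontrivial (Q : QNA K R N r) : Nontrivial R :=
  ⟨ordMonomial Q.x 0, 0, Q.pbw.ne_zero 0⟩

theorem QNA.algebraMap_inj (Q : QNA K R N r) : Function.Injective (algebraMap K R) := by
  have := Q.nontrivial
  exact (algebraMap K R).injective

theorem QNA.noethR (n : ℕ) (hn : n ≤ N) : IsNoetherianRing (Rsub K Q.x n) := by
  induction n with
  | zero =>
    have : Rsub K Q.x 0 = ⊥ := by simp [Rsub]
    rw [this]
    exact isNoetherianRing_of_surjective K (⊥ : Subalgebra K R) (algebraMap K _)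
      (fun y => by
        obtain ⟨y, hy⟩ := y
        obtain ⟨c, rfl⟩ := Algebra.mem_bot.1 hy
        exact ⟨c, rfl⟩)
  | succ n ih => exact (Q.oreStep ⟨n, hn⟩).noeth (ih (by omega))

theorem QNA.domR (n : ℕ) (hn : n ≤ N) :
    ∀ a ∈ Rsub K Q.x n, ∀ b ∈ Rsub K Q.x n, a * b = 0 → a = 0 ∨ b = 0 := by
  induction n with
  | zero =>
    intro a ha b hb hab
    obtain ⟨c, rfl⟩ := Rsub_zero Q ha
    obtain ⟨d, rfl⟩ := Rsub_zero Q hb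
    rw [← map_mul] at hab
    have := (map_eq_zero_iff _ Q.algebraMap_inj).1 hab
    rcases mul_eq_zero.1 this with h | h <;> simp [h]
  | succ n ih => exact (Q.oreStep ⟨n, hn⟩).dom (ih (by omega))

theorem QNA.isNoetherian (Q : QNA K R N r) : IsNoetherianRing R := by
  have := Q.noethR N le_rfl
  rw [Rsub_top] at this
  exact isNoetherianRing_of_ringEquiv _ (Subalgebra.topEquiv (R := K) (A := R)).toRingEquiv

theorem QNA.isDomain (Q : QNA K R N r) : IsDomain R := by
  have := Q.nontrivial
  have hd := Q.domR N le_rfl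
  rw [Rsub_top] at hd
  have : NoZeroDivisors R := ⟨fun {a b} h => hd a trivial b trivial h⟩
  exact NoZeroDivisors.to_isDomain R

end FromQNA


section OreCond

theorem ore_aux {A : Type v} [Ring A] (hd : ∀ a b : A, a * b = 0 → a = 0 ∨ b = 0) {a b : A}
    (ha : a ≠ 0) (n : ℕ) : ∀ r : ℕ → A, ∑ i ∈ Finset.range n, r i * (b * a ^ i) = 0 →
    (∃ i < n, r i ≠ 0) → ∃ c d : A, c ≠ 0 ∧ c * b = d * a := by
  induction n with
  | zero => rintro r _ ⟨i, hi, _⟩; omega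
  | succ n ih =>
    rintro r h ⟨i, hi, hri⟩
    rw [Finset.sum_range_succ'] at h
    have e : ∑ i ∈ Finset.range n, r (i+1) * (b * a ^ (i+1)) =
      (∑ i ∈ Finset.range n, r (i+1) * (b * a ^ i)) * a := by
      rw [Finset.sum_mul]
      apply Finset.sum_congr rfl
      intro i _
      rw [pow_succ]; noncomm_ring
    rw [e] at h
    by_cases h0 : r 0 = 0
    · rw [h0, zero_mul, add_zero] at h
      rcases hd _ _ h with h | h
      · refine ih (fun i => r (i+1)) h ?_
        cases i with
        | zero => exact absurd h0 hri
        | succ i => exact ⟨i, by omega, hri⟩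
      · exact absurd h ha
    · refine ⟨r 0, -(∑ i ∈ Finset.range n, r (i+1) * (b * a ^ i)), h0, ?_⟩
      rw [neg_mul, eq_neg_iff_add_eq_zero, add_comm]
      simpa using h

theorem ore_of_noeth {A : Type v} [Ring A] [IsNoetherianRing A] [Nontrivial A]
    (hd : ∀ a b : A, a * b = 0 → a = 0 ∨ b = 0) {a : A} (b : A) (ha : a ≠ 0) :
    ∃ c d : A, c ≠ 0 ∧ c * b = d * a := by
  have hs := monotone_stabilizes_iff_noetherian.2 (isNoetherianRing_iff.1 ‹IsNoetherianRing A›)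
  obtain ⟨n, hn⟩ := hs ⟨fun n => Submodule.span A ((fun i => b * a ^ i) '' (Finset.range n : Set ℕ)),
    fun n m h => Submodule.span_mono (Set.image_mono (by
      intro i hi; simp at hi ⊢; omega))⟩
  have h1 : b * a ^ n ∈ Submodule.span A ((fun i => b * a ^ i) '' (Finset.range (n+1) : Set ℕ)) :=
    Submodule.subset_span ⟨n, by simp, rfl⟩
  have h2 := hn (n+1) (by omega)
  change Submodule.span A _ = Submodule.span A _ at h2
  rw [← h2] at h1
  obtain ⟨r, hr⟩ := (Submodule.mem_span_image_finset_iff_exists_fun' A).1 h1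
  apply ore_aux hd ha (n+1) (fun i => if i = n then -1 else r i)
  · rw [Finset.sum_range_succ]
    have : ∑ i ∈ Finset.range n, (if i = n then -1 else r i) * (b * a ^ i) =
        ∑ i ∈ Finset.range n, r i • (b * a ^ i) := by
      apply Finset.sum_congr rfl
      intro i hi
      rw [if_neg (Finset.mem_range.1 hi).ne, smul_eq_mul]
    rw [this, hr]; simp
  · exact ⟨n, by omega, by simp⟩

end OreCond

section DivRing
variable {K : Type u} [Field K] {R : Type v} [Ring R] [Algebra K R]

theorem exists_div [IsNoetherianRing R] [IsDomain R] :
    ∃ (D : Type v) (_ : DivisionRing D) (_ : Algebra K D) (ι : R →ₐ[K] D),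
      Function.Injective ι ∧ (∀ d, ∃ s t, s ≠ 0 ∧ ι s * d = ι t) ∧
      ∀ φ : R →ₐ[K] R, Function.Injective φ → ∃ ψ : D →ₐ[K] D, ∀ a, ψ (ι a) = ι (φ a) := by
  have hO : Nonempty (OreLocalization.OreSet (nonZeroDivisors R)) := by
    rw [OreLocalization.nonempty_oreSet_iff_of_noZeroDivisors]
    intro a s
    obtain ⟨c, d, hc, h⟩ := ore_of_noeth (fun a b h => mul_eq_zero.1 h) (a := (s : R)) a
      (nonZeroDivisors.coe_ne_zero s)
    exact ⟨d, ⟨c, mem_nonZeroDivisors_of_ne_zero hc⟩, h⟩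
  obtain ⟨hO⟩ := hO
  let ι : R →ₐ[K] OreLocalization (nonZeroDivisors R) R :=
    { (OreLocalization.numeratorRingHom : R →+* OreLocalization (nonZeroDivisors R) R) with
      commutes' := fun c => rfl }
  have hι : Function.Injective ι := OreLocalization.numeratorHom_inj inf_le_left
  refine ⟨OreLocalization (nonZeroDivisors R) R, inferInstance, inferInstance, ι, hι, ?_, ?_⟩
  · intro d
    induction d using OreLocalization.ind with
    | _ t s =>
    refine ⟨s, t, nonZeroDivisors.coe_ne_zero s, ?_⟩
    change ((s : R) /ₒ 1) * (t /ₒ s) = t /ₒ 1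
    exact OreLocalization.mul_cancel
  · intro φ hφ
    let fS : nonZeroDivisors R →* (OreLocalization (nonZeroDivisors R) R)ˣ :=
      { toFun := fun s => Units.mk0 (ι (φ s)) (by
          rw [Ne, map_eq_zero_iff _ hι, map_eq_zero_iff _ hφ]
          exact nonZeroDivisors.coe_ne_zero s)
        map_one' := by ext; simp
        map_mul' := fun s t => by ext; simp }
    let ψ := OreLocalization.universalHom ((ι.comp φ : R →ₐ[K] _) : R →+* _) fS (fun s => rfl)
    have hψ : ∀ a, ψ (ι a) = ι (φ a) := fun a => OreLocalization.universalHom_commutes _ _ _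
    refine ⟨{ ψ with commutes' := fun c => ?_ }, hψ⟩
    change ψ (algebraMap K _ c) = _
    rw [← ι.commutes, hψ, φ.commutes]

/-- The division ring of fractions with the extended action. -/
theorem exists_div_act {r : ℕ} [IsNoetherianRing R] [IsDomain R] (act : Torus K r →* (R ≃ₐ[K] R)) :
    ∃ (D : Type v) (_ : DivisionRing D) (_ : Algebra K D) (ι : R →ₐ[K] D)
      (actD : Torus K r →* (D ≃ₐ[K] D)),
      Function.Injective ι ∧ (∀ ξ a, actD ξ (ι a) = ι (act ξ a)) := by
  obtain ⟨D, i1, i2, ι, hι, hfr, hext⟩ := exists_div (K := K) (R := R)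
  refine ⟨D, i1, i2, ι, ?_⟩
  have huniq : ∀ f g : D →ₐ[K] D, (∀ a, f (ι a) = g (ι a)) → f = g := by
    intro f g h
    ext d
    obtain ⟨s, t, hs, hst⟩ := hfr d
    have h1 := congrArg f hst
    have h2 := congrArg g hst
    rw [map_mul] at h1 h2
    rw [← h t, ← h1, h s] at h2
    have h3 : g (ι s) ≠ 0 := by
      exact fun h0 => hs ((map_eq_zero_iff ι hι).1 ((map_eq_zero_iff g (RingHom.injective (g : D →+* D))).1 h0))
    exact (mul_left_cancel₀ h3 h2).symm
  choose E hE using fun ξ : Torus K r => hext (act ξ : R →ₐ[K] R) (act ξ).injective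
  have hmul : ∀ ξ η, E (ξ * η) = (E ξ).comp (E η) := by
    intro ξ η
    apply huniq
    intro a
    simp [hE]
  have hone : E 1 = AlgHom.id K D := by
    apply huniq
    intro a
    simp [hE]
  refine ⟨{ toFun := fun ξ => AlgEquiv.ofAlgHom (E ξ) (E ξ⁻¹) ?_ ?_, map_one' := ?_,
            map_mul' := ?_ }, hι, ?_⟩
  · rw [← hmul, mul_inv_cancel, hone]
  · rw [← hmul, inv_mul_cancel, hone]
  · ext d; simp [hone]
  · intro ξ η; ext d; simp [hmul]
  · intro ξ a; simp [hE]

end DivRing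


section LinAlg
open Polynomial
variable {K : Type u} [Field K] {V : Type v} [AddCommGroup V] [Module K V]

/-- `w` is killed by a split separable polynomial in `Φ`. -/
def PKill (Φ : Module.End K V) (w : V) : Prop :=
  ∃ s : Finset K, aeval Φ (∏ κ ∈ s, (X - C κ)) w = 0

theorem PKill.mono {Φ : Module.End K V} {w : V} {s s' : Finset K} (h : s ⊆ s')
    (hs : aeval Φ (∏ κ ∈ s, (X - C κ)) w = 0) : aeval Φ (∏ κ ∈ s', (X - C κ)) w = 0 := by
  classical
  rw [← Finset.prod_sdiff h, map_mul, Module.End.mul_apply, hs, map_zero]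

theorem PKill.add {Φ : Module.End K V} {w w' : V} (h : PKill Φ w) (h' : PKill Φ w') :
    PKill Φ (w + w') := by
  classical
  obtain ⟨s, hs⟩ := h
  obtain ⟨s', hs'⟩ := h'
  exact ⟨s ∪ s', by rw [map_add, PKill.mono Finset.subset_union_left hs,
    PKill.mono Finset.subset_union_right hs', add_zero]⟩

theorem PKill.smul {Φ : Module.End K V} {w : V} (c : K) (h : PKill Φ w) : PKill Φ (c • w) := by
  obtain ⟨s, hs⟩ := h
  exact ⟨s, by rw [map_smul, hs, smul_zero]⟩

theorem PKill.zero {Φ : Module.End K V} : PKill Φ (0 : V) := ⟨∅, by simp⟩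

theorem PKill.eig {Φ : Module.End K V} {w : V} {κ : K} (h : Φ w = κ • w) : PKill Φ w :=
  ⟨{κ}, by simp [h, Algebra.algebraMap_eq_smul_one]⟩

theorem aeval_stable {Φ : Module.End K V} {W : Submodule K V} (hW : ∀ w ∈ W, Φ w ∈ W) (p : K[X])
    {w : V} (hw : w ∈ W) : aeval Φ p w ∈ W := by
  induction p using Polynomial.induction_on' with
  | add p q hp hq => rw [map_add, LinearMap.add_apply]; exact W.add_mem hp hq
  | monomial n c =>
    rw [aeval_monomial, Module.End.mul_apply, Module.algebraMap_end_apply]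
    apply W.smul_mem
    induction n with
    | zero => simpa using hw
    | succ n ih => rw [pow_succ', Module.End.mul_apply]; exact hW _ ih

theorem PKill.poly {Φ : Module.End K V} {w : V} (h : PKill Φ w) :
    ∃ q r : K[X], q + (1 - X) * r = 1 ∧ aeval Φ ((1 - X) * q) w = 0 := by
  classical
  obtain ⟨s, hs⟩ := h
  set q : K[X] := ∏ κ ∈ s.erase 1, (X - C κ) with hq
  have hq1 : q.eval 1 ≠ 0 := by
    rw [hq, eval_prod, Finset.prod_ne_zero_iff]
    intro κ hκ
    simp only [eval_sub, eval_X, eval_C]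
    exact sub_ne_zero.2 (Finset.ne_of_mem_erase hκ).symm
  have hdiv : (X - C 1) ∣ (1 - C (q.eval 1)⁻¹ * q) := by
    rw [dvd_iff_isRoot]; simp [hq1]
  obtain ⟨r, hr⟩ := hdiv
  refine ⟨C (q.eval 1)⁻¹ * q, -r, ?_, ?_⟩
  · have : (1 - X) * -r = (X - C 1) * r := by rw [map_one]; ring
    rw [this, ← hr]; ring
  · have : (1 - X) * (C (q.eval 1)⁻¹ * q) = -C (q.eval 1)⁻¹ * ((X - C 1) * q) := by
      rw [map_one]; ring
    rw [this, hq, map_mul, Module.End.mul_apply]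
    have h1 : aeval Φ ((X - C 1) * ∏ κ ∈ s.erase 1, (X - C κ)) w = 0 := by
      rw [← Finset.prod_insert (f := fun κ => (X - C κ : K[X])) (Finset.notMem_erase 1 s)]
      exact PKill.mono (Finset.subset_insert_iff.2 subset_rfl) hs
    rw [h1, map_zero]

theorem PKill.ker_im {Φ : Module.End K V} {y : V} (h : PKill Φ y)
    (h2 : (y - Φ y) - Φ (y - Φ y) = 0) : y - Φ y = 0 := by
  obtain ⟨q, r, hqr, hq⟩ := h.poly
  have e : ∀ v, aeval Φ (1 - X : K[X]) v = v - Φ v := by intro v; simp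
  have h3 := congrArg (fun p => aeval Φ p (y - Φ y)) hqr
  simp only [map_add, LinearMap.add_apply] at h3
  have h4 : aeval Φ q (y - Φ y) = 0 := by
    rw [← e y, ← Module.End.mul_apply, ← map_mul, mul_comm q, hq]
  have h5 : aeval Φ ((1 - X) * r) (y - Φ y) = 0 := by
    rw [mul_comm, map_mul, Module.End.mul_apply, e, h2, map_zero]
  rw [h4, h5] at h3
  simpa using h3.symm

theorem PKill.split {Φ : Module.End K V} {W : Submodule K V} (hW : ∀ w ∈ W, Φ w ∈ W) {w : V}
    (hw : w ∈ W) (h : PKill Φ w) :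
    ∃ e ∈ W, ∃ g ∈ W, Φ e = e ∧ w = e + (g - Φ g) := by
  obtain ⟨q, r, hqr, hq⟩ := h.poly
  have e : ∀ v, aeval Φ (1 - X : K[X]) v = v - Φ v := by intro v; simp
  refine ⟨aeval Φ q w, aeval_stable hW q hw, aeval Φ r w, aeval_stable hW r hw, ?_, ?_⟩
  · rw [map_mul, Module.End.mul_apply, e, sub_eq_zero] at hq
    exact hq.symm
  · rw [← e, ← Module.End.mul_apply, ← map_mul, ← LinearMap.add_apply, ← map_add, hqr]
    simp

variable {ι : Type v} [DecidableEq ι]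

theorem cocycle_aux (Φ : ι → Module.End K V) (W : Submodule K V) (S : Finset ι)
    (hW : ∀ t ∈ S, ∀ w ∈ W, Φ t w ∈ W) (hc : ∀ t ∈ S, ∀ t' ∈ S, ∀ w, Φ t (Φ t' w) = Φ t' (Φ t w))
    (hk : ∀ t ∈ S, ∀ w ∈ W, PKill (Φ t) w) (E : ι → V)
    (him : ∀ t ∈ S, ∃ w ∈ W, E t = w - Φ t w)
    (hcoc : ∀ t ∈ S, ∀ t' ∈ S, E t' - Φ t (E t') = E t - Φ t' (E t)) :
    ∃ g ∈ W, ∀ t ∈ S, E t = g - Φ t g := by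
  induction S using Finset.induction_on with
  | empty => exact ⟨0, W.zero_mem, by simp⟩
  | insert j S hj ih =>
    have m : ∀ {t}, t ∈ S → t ∈ insert j S := fun h => Finset.mem_insert_of_mem h
    have mj : j ∈ insert j S := Finset.mem_insert_self _ _
    obtain ⟨g', hg', hE'⟩ := ih (fun t ht => hW t (m ht))
      (fun t ht t' ht' => hc t (m ht) t' (m ht')) (fun t ht => hk t (m ht))
      (fun t ht => him t (m ht)) (fun t ht t' ht' => hcoc t (m ht) t' (m ht'))
    let W' : Submodule K V :=
      { carrier := {w | w ∈ W ∧ ∀ t ∈ S, Φ t w = w}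
        zero_mem' := ⟨W.zero_mem, by simp⟩
        add_mem' := fun {a b} ha hb => ⟨W.add_mem ha.1 hb.1, fun t ht => by
          rw [map_add, ha.2 t ht, hb.2 t ht]⟩
        smul_mem' := fun c a ha => ⟨W.smul_mem c ha.1, fun t ht => by rw [map_smul, ha.2 t ht]⟩ }
    obtain ⟨w, hw, hwE⟩ := him j mj
    set d := E j - (g' - Φ j g') with hd
    have hdW : d ∈ W' := by
      refine ⟨W.sub_mem (by rw [hwE]; exact W.sub_mem hw (hW j mj w hw))
        (W.sub_mem hg' (hW j mj _ hg')), fun t ht => ?_⟩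
      have h1 := hcoc t (m ht) j mj
      rw [hE' t ht] at h1
      simp only [map_sub] at h1
      rw [hd]
      simp only [map_sub]
      rw [hc t (m ht) j mj g']
      have h2 : Φ t (E j) = E j - (g' - (Φ t) g' - ((Φ j) g' - (Φ j) ((Φ t) g'))) := by
        rw [← h1]; abel
      rw [h2]; abel
    have hW'j : ∀ w ∈ W', Φ j w ∈ W' := fun v hv =>
      ⟨hW j mj v hv.1, fun t ht => by rw [hc t (m ht) j mj, hv.2 t ht]⟩
    obtain ⟨e, he, g, hg, hfix, hde⟩ := PKill.split hW'j hdW (hk j mj d hdW.1)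
    have he' : e = (w - g' - g) - Φ j (w - g' - g) := by
      have : e = d - (g - Φ j g) := by rw [hde]; abel
      rw [this, hd, hwE]; simp only [map_sub]; abel
    have he0 : e = 0 := by
      rw [he']
      apply PKill.ker_im (hk j mj _ (W.sub_mem (W.sub_mem hw hg') hg.1))
      rw [← he', hfix, sub_self]
    refine ⟨g' + g, W.add_mem hg' hg.1, fun t ht => ?_⟩
    rcases Finset.mem_insert.1 ht with rfl | ht
    · have : E t = d + (g' - Φ t g') := by rw [hd]; abel
      rw [this, hde, he0, map_add]; abel
    · rw [hE' t ht, map_add, hg.2 t ht]; abel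

theorem cocycle (Φ : ι → Module.End K V) (W : Submodule K V) (S : Finset ι)
    (hW : ∀ t ∈ S, ∀ w ∈ W, Φ t w ∈ W) (hc : ∀ t ∈ S, ∀ t' ∈ S, ∀ w, Φ t (Φ t' w) = Φ t' (Φ t w))
    (hk : ∀ t ∈ S, ∀ w ∈ W, PKill (Φ t) w)
    (hfix : ∀ e ∈ W, (∀ t ∈ S, Φ t e = e) → e = 0) (E : ι → V) (hE : ∀ t ∈ S, E t ∈ W)
    (hcoc : ∀ t ∈ S, ∀ t' ∈ S, E t' - Φ t (E t') = E t - Φ t' (E t)) :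
    ∃ g ∈ W, ∀ t ∈ S, E t = g - Φ t g := by
  refine cocycle_aux Φ W S hW hc hk E (fun j hj => ?_) hcoc
  obtain ⟨e, he, g, hg, hje, hd⟩ := PKill.split (hW j hj) (hE j hj) (hk j hj _ (hE j hj))
  refine ⟨g, hg, ?_⟩
  have : e = 0 := by
    refine hfix e he (fun t ht => ?_)
    have h1 : e - Φ t e = (E t - (g - Φ t g)) - Φ j (E t - (g - Φ t g)) := by
      have h2 := hcoc t ht j hj
      have h3 : e = E j - (g - Φ j g) := by rw [hd]; abel
      rw [h3]
      simp only [map_sub]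
      rw [hc t ht j hj g]
      have h4 : Φ t (E j) = E j - (E t - (Φ j) (E t)) := by rw [← h2]; abel
      rw [h4]; abel
    have h0 : e - Φ t e = 0 := by
      rw [h1]
      apply PKill.ker_im (hk j hj _ (W.sub_mem (hE t ht) (W.sub_mem hg (hW t ht g hg))))
      rw [← h1, map_sub, hc j hj t ht, hje, sub_self]
    exact (sub_eq_zero.1 h0).symm
  rw [hd, this, zero_add]

end LinAlg


section Inner
variable {K : Type u} [Field K] {D : Type v} [DivisionRing D] [Algebra K D] {r : ℕ}

/-- left Ore condition for a subalgebra of a division ring. -/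
def LOre (A : Subalgebra K D) : Prop :=
  ∀ a ∈ A, ∀ b ∈ A, a ≠ 0 → ∃ c ∈ A, ∃ d ∈ A, c ≠ 0 ∧ c * b = d * a

theorem lore_of_noeth (A : Subalgebra K D) (hA : IsNoetherianRing A) : LOre A := by
  intro a ha b hb h0
  obtain ⟨c, d, hc, h⟩ := ore_of_noeth (A := A) (fun a b h => mul_eq_zero.1 h) (a := ⟨a, ha⟩)
    ⟨b, hb⟩ (fun h => h0 (congrArg Subtype.val h))
  exact ⟨c, c.2, d, d.2, fun h => hc (Subtype.ext h), congrArg Subtype.val h⟩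

/-- Left fractions of `A` inside `D`. -/
def Fr (A : Subalgebra K D) (hA : LOre A) : Subalgebra K D where
  carrier := {d | ∃ u ∈ A, u ≠ 0 ∧ u * d ∈ A}
  mul_mem' := by
    rintro d1 d2 ⟨u1, h1, h10, hd1⟩ ⟨u2, h2, h20, hd2⟩
    obtain ⟨c, hc, e, he, hc0, h⟩ := hA u2 h2 _ hd1 h20
    refine ⟨c * u1, A.mul_mem hc h1, mul_ne_zero hc0 h10, ?_⟩
    have : c * u1 * (d1 * d2) = e * (u2 * d2) := by
      rw [← mul_assoc e, ← h]; noncomm_ring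
    rw [this]; exact A.mul_mem he hd2
  add_mem' := by
    rintro d1 d2 ⟨u1, h1, h10, hd1⟩ ⟨u2, h2, h20, hd2⟩
    obtain ⟨c, hc, e, he, hc0, h⟩ := hA u2 h2 _ h1 h20
    refine ⟨c * u1, A.mul_mem hc h1, mul_ne_zero hc0 h10, ?_⟩
    have : c * u1 * (d1 + d2) = c * (u1 * d1) + e * (u2 * d2) := by
      rw [mul_add, mul_assoc c, h]; noncomm_ring
    rw [this]; exact A.add_mem (A.mul_mem hc hd1) (A.mul_mem he hd2)
  algebraMap_mem' := fun c => ⟨1, A.one_mem, one_ne_zero, by simp⟩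

theorem le_Fr {A : Subalgebra K D} (hA : LOre A) : A ≤ Fr A hA := fun a ha =>
  ⟨1, A.one_mem, one_ne_zero, by simpa using ha⟩

theorem Fr_inv {A : Subalgebra K D} (hA : LOre A) {d : D} (hd : d ∈ Fr A hA) : d⁻¹ ∈ Fr A hA := by
  by_cases h0 : d = 0
  · rw [h0, inv_zero]; exact Subalgebra.zero_mem _
  obtain ⟨u, hu, hu0, hud⟩ := hd
  exact ⟨u * d, hud, mul_ne_zero hu0 h0, by rw [mul_assoc, mul_inv_cancel₀ h0, mul_one]; exact hu⟩

theorem Fr_mono {A B : Subalgebra K D} (hA : LOre A) (hB : LOre B) (h : A ≤ B) :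
    Fr A hA ≤ Fr B hB := by
  rintro d ⟨u, hu, hu0, hud⟩
  exact ⟨u, h hu, hu0, h hud⟩

/-- characters -/
def chi (f : Fin r → ℤ) (ξ : Torus K r) : Kˣ := ∏ i, ξ i ^ f i

theorem chi_add (f g : Fin r → ℤ) (ξ : Torus K r) : chi (f + g) ξ = chi f ξ * chi g ξ := by
  simp [chi, zpow_add, Finset.prod_mul_distrib]

theorem chi_neg (f : Fin r → ℤ) (ξ : Torus K r) : chi (-f) ξ = (chi f ξ)⁻¹ := by
  simp [chi]

theorem chi_zero (ξ : Torus K r) : chi (0 : Fin r → ℤ) ξ = 1 := by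
  simp [chi]

variable {act : Torus K r →* (D ≃ₐ[K] D)}

theorem IsEigenWith.def {f : Fin r → ℤ} {a : D} (h : IsEigenWith K act f a) (ξ : Torus K r) :
    act ξ a = (chi f ξ : K) • a := h ξ

theorem IsEigenWith.mul {f g : Fin r → ℤ} {a b : D} (ha : IsEigenWith K act f a)
    (hb : IsEigenWith K act g b) : IsEigenWith K act (f + g) (a * b) := by
  intro ξ
  change _ = (chi (f + g) ξ : K) • _
  rw [map_mul, ha.def, hb.def, chi_add, smul_mul_smul_comm, Units.val_mul]

theorem IsEigenWith.inv {f : Fin r → ℤ} {a : D} (ha : IsEigenWith K act f a) :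
    IsEigenWith K act (-f) a⁻¹ := by
  intro ξ
  change _ = (chi (-f) ξ : K) • _
  rw [map_inv₀, ha.def, chi_neg, smul_inv₀, Units.val_inv_eq_inv_val]

theorem IsEigenWith.sub {f : Fin r → ℤ} {a b : D} (ha : IsEigenWith K act f a)
    (hb : IsEigenWith K act f b) : IsEigenWith K act f (a - b) := by
  intro ξ
  change _ = (chi f ξ : K) • _
  rw [map_sub, ha.def, hb.def, smul_sub]

theorem IsEigenWith.add {f : Fin r → ℤ} {a b : D} (ha : IsEigenWith K act f a)
    (hb : IsEigenWith K act f b) : IsEigenWith K act f (a + b) := by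
  intro ξ
  change _ = (chi f ξ : K) • _
  rw [map_add, ha.def, hb.def, smul_add]

theorem IsEigenWith.smul {f : Fin r → ℤ} {a : D} (c : K) (ha : IsEigenWith K act f a) :
    IsEigenWith K act f (c • a) := by
  intro ξ
  change _ = (chi f ξ : K) • _
  rw [map_smul, ha.def, smul_comm]

theorem IsEigenWith.zero' {f : Fin r → ℤ} : IsEigenWith K act f (0 : D) := by
  intro ξ; simp

theorem IsEigenWith.one' : IsEigenWith K act 0 (1 : D) := by
  intro ξ; simp

/-- The quantum torus generated by `S`. -/
def TT (K : Type u) [Field K] [Algebra K D] (S : Finset D) : Subalgebra K D :=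
  Algebra.adjoin K ((S : Set D) ∪ (fun t => t⁻¹) '' (S : Set D))

theorem mem_TT {S : Finset D} {t : D} (h : t ∈ S) : t ∈ TT K S :=
  Algebra.subset_adjoin (Or.inl h)

theorem inv_mem_TT {S : Finset D} {t : D} (h : t ∈ S) : t⁻¹ ∈ TT K S :=
  Algebra.subset_adjoin (Or.inr ⟨t, h, rfl⟩)

theorem TT_mono {S S' : Finset D} (h : S ⊆ S') : TT K S ≤ TT K S' :=
  Algebra.adjoin_mono (Set.union_subset_union (by exact_mod_cast h)
    (Set.image_mono (by exact_mod_cast h)))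

theorem TT_le {S : Finset D} {T : Subalgebra K D} (h1 : ∀ t ∈ S, t ∈ T) (h2 : ∀ t ∈ S, t⁻¹ ∈ T) :
    TT K S ≤ T := by
  apply Algebra.adjoin_le
  rintro t (ht | ⟨t, ht, rfl⟩)
  exacts [h1 t ht, h2 t ht]

variable (act)

structure Good (A : Subalgebra K D) (S : Finset D) : Prop where
  ne : ∀ t ∈ S, t ≠ 0
  eig : ∀ t ∈ S, ∃ f, IsEigenWith K act f t
  qc : ∀ t ∈ S, ∀ t' ∈ S, ∃ ω : K, t * t' = ω • (t' * t)
  le : A ≤ TT K S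
  frac : ∀ d ∈ TT K S, ∃ u ∈ A, u ≠ 0 ∧ u * d ∈ A
  dp : ∀ T' : Subalgebra K D, TT K S ≤ T' → ∀ (x : D) (ξ : Torus K r),
    (∀ a ∈ A, x * a - act ξ a * x ∈ T') → ∀ t ∈ TT K S, x * t - act ξ t * x ∈ T'

/-- One step of a CGL extension, inside a division ring. -/
structure CStep (A B : Subalgebra K D) (x : D) (h : Torus K r) (lam : K) (fx : Fin r → ℤ) :
    Prop where
  ore : OreStep A B x (act h)
  xeig : IsEigenWith K act fx x
  stab : ∀ ξ, ∀ a ∈ A, act ξ a ∈ A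
  stabB : ∀ ξ, ∀ a ∈ B, act ξ a ∈ B
  hlam : act h x = lam • x
  root : ∀ n : ℕ, n ≠ 0 → lam ^ n ≠ 1
  nil : ∀ a ∈ A, ∃ n : ℕ, (fun a => x * a - act h a * x)^[n] a = 0
  noethA : IsNoetherianRing A
  noethB : IsNoetherianRing B

/-- the twisted conjugation operators -/
def Phi (h : Torus K r) (t : D) : Module.End K D :=
  LinearMap.mulLeft K (act h t) ∘ₗ LinearMap.mulRight K t⁻¹

variable {act}

@[simp] theorem Phi_apply (h : Torus K r) (t w : D) : Phi act h t w = act h t * (w * t⁻¹) := rfl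

theorem Phi_fix {h : Torus K r} {S : Finset D} (hne : ∀ t ∈ S, t ≠ 0) {y : D}
    (hy : ∀ t ∈ S, Phi act h t y = y) : ∀ t ∈ TT K S, y * t = act h t * y := by
  intro t ht
  induction ht using Algebra.adjoin_induction with
  | mem t ht =>
    have key : ∀ t ∈ S, y * t = act h t * y := by
      intro t ht
      have := hy t ht
      rw [Phi_apply, ← mul_assoc] at this
      exact ((mul_inv_eq_iff_eq_mul₀ (hne t ht)).1 this).symm
    rcases ht with ht | ⟨t, ht, rfl⟩
    · exact key t ht
    · have h1 := key t ht
      have ht0 := hne t ht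
      have ht1 : act h t ≠ 0 := by simpa using ht0
      change y * t⁻¹ = act h t⁻¹ * y
      rw [map_inv₀, mul_inv_eq_iff_eq_mul₀ ht0, mul_assoc, h1, inv_mul_cancel_left₀ ht1]
  | algebraMap c => rw [AlgEquiv.commutes]; exact (Algebra.commutes _ _).symm
  | add a b _ _ ha hb => rw [mul_add, ha, hb, map_add, add_mul]
  | mul a b _ _ ha hb => rw [← mul_assoc, ha, mul_assoc, hb, map_mul, mul_assoc]

theorem Good.qcT {A : Subalgebra K D} {S : Finset D} (G : Good act A S) {t : D} (ht : t ∈ S) :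
    ∀ m ∈ Submonoid.closure ((S : Set D) ∪ (fun t => t⁻¹) '' (S : Set D)),
      ∃ ω : K, t * m = ω • (m * t) := by
  intro m hm
  induction hm using Submonoid.closure_induction with
  | mem y hy =>
    rcases hy with hy | ⟨y, hy, rfl⟩
    · exact G.qc t ht y hy
    · obtain ⟨ω, hω⟩ := G.qc y hy t ht
      have hy0 := G.ne y hy
      refine ⟨ω, ?_⟩
      change t * y⁻¹ = ω • (y⁻¹ * t)
      rw [mul_inv_eq_iff_eq_mul₀ hy0, smul_mul_assoc, mul_assoc, ← mul_smul_comm, ← hω,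
        inv_mul_cancel_left₀ hy0]
  | one => exact ⟨1, by simp⟩
  | mul a b _ _ ha hb =>
    obtain ⟨ω, h1⟩ := ha
    obtain ⟨ω', h2⟩ := hb
    exact ⟨ω * ω', by
      rw [← mul_assoc, h1, smul_mul_assoc, mul_assoc, h2, mul_smul_comm, smul_smul, mul_assoc]⟩

theorem Good.pkill {A : Subalgebra K D} {S : Finset D} (G : Good act A S) (h : Torus K r) {t : D}
    (ht : t ∈ S) {w : D} (hw : w ∈ TT K S) : PKill (Phi act h t) w := by
  rw [TT, ← Subalgebra.mem_toSubmodule, Algebra.adjoin_eq_span] at hw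
  obtain ⟨f, hf⟩ := G.eig t ht
  induction hw using Submodule.span_induction with
  | mem y hy =>
    obtain ⟨ω, hω⟩ := G.qcT ht y hy
    apply PKill.eig (κ := (chi f h : K) * ω)
    rw [Phi_apply, hf.def, ← mul_assoc, smul_mul_assoc, hω, smul_mul_assoc, smul_mul_assoc,
      mul_inv_cancel_right₀ (G.ne t ht), smul_smul]
  | zero => exact PKill.zero
  | add y z _ _ hy hz => exact hy.add hz
  | smul c y _ hy => exact hy.smul c

theorem Good.comm {A : Subalgebra K D} {S : Finset D} (G : Good act A S) (h : Torus K r) {t t' : D}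
    (ht : t ∈ S) (ht' : t' ∈ S) (w : D) :
    Phi act h t (Phi act h t' w) = Phi act h t' (Phi act h t w) := by
  obtain ⟨ω, hω⟩ := G.qc t ht t' ht'
  have ht0 := G.ne t ht
  have ht0' := G.ne t' ht'
  have hω0 : ω ≠ 0 := by
    rintro rfl
    rw [zero_smul] at hω
    exact mul_ne_zero ht0 ht0' hω
  have e : ∀ t t' : D, Phi act h t (Phi act h t' w) = act h (t * t') * w * (t * t')⁻¹ := by
    intro t t'
    rw [Phi_apply, Phi_apply, map_mul, mul_inv_rev]; noncomm_ring
  rw [e, e, hω, map_smul, smul_inv₀, smul_mul_assoc, smul_mul_assoc, mul_smul_comm, smul_smul,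
    mul_inv_cancel₀ hω0, one_smul]

theorem Phi_eig {h : Torus K r} {f fx : Fin r → ℤ} {t w : D} (ht : IsEigenWith K act f t)
    (hw : IsEigenWith K act fx w) : IsEigenWith K act fx (Phi act h t w) := by
  rw [Phi_apply, ht.def h, smul_mul_assoc]
  have := (ht.mul (hw.mul ht.inv)).smul (chi f h : K)
  have e : f + (fx + -f) = fx := by abel
  rwa [e] at this

theorem CStep.x_ne {A B : Subalgebra K D} {x : D} {h : Torus K r} {lam : K} {fx : Fin r → ℤ}
    (C : CStep act A B x h lam fx) {a u : D} (ha : a ∈ A) (hu : u ∈ A) (hu0 : u ≠ 0) :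
    u * x ≠ a := by
  intro he
  have h1 : (-a) ∈ LTn A x 1 := by simpa using term_mem_LTn (x := x) (n := 0) (A.neg_mem ha)
  exact C.ore.lead_ne h1 hu hu0 (by rw [pow_one, he]; simp)

theorem CStep.lam_eq {A B : Subalgebra K D} {x : D} {h : Torus K r} {lam : K} {fx : Fin r → ℤ}
    (C : CStep act A B x h lam fx) : (chi fx h : K) = lam := by
  have h1 := C.xeig.def h
  rw [C.hlam] at h1
  have hx : x ≠ 0 := by
    have := C.x_ne A.zero_mem A.one_mem one_ne_zero
    simpa using this
  exact (smul_left_injective K hx h1).symm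

theorem Good.inner {A B : Subalgebra K D} {S : Finset D} (G : Good act A S) {x : D} {h : Torus K r}
    {lam : K} {fx : Fin r → ℤ} (C : CStep act A B x h lam fx) :
    ∃ g ∈ TT K S, IsEigenWith K act fx g ∧ ∀ t ∈ TT K S, (x - g) * t = act h t * (x - g) := by
  classical
  let W : Submodule K D :=
    { carrier := {w | w ∈ TT K S ∧ IsEigenWith K act fx w}
      zero_mem' := ⟨Subalgebra.zero_mem _, IsEigenWith.zero'⟩
      add_mem' := fun ha hb => ⟨Subalgebra.add_mem _ ha.1 hb.1, ha.2.add hb.2⟩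
      smul_mem' := fun c _ ha => ⟨Subalgebra.smul_mem _ ha.1 c, ha.2.smul c⟩ }
  obtain ⟨g, hg, hE⟩ := cocycle (fun t => Phi act h t) W S
    (by
      intro t ht w hw
      obtain ⟨f, hf⟩ := G.eig t ht
      refine ⟨?_, Phi_eig hf hw.2⟩
      rw [Phi_apply, hf.def]
      exact Subalgebra.mul_mem _ (Subalgebra.smul_mem _ (mem_TT ht) _)
        (Subalgebra.mul_mem _ hw.1 (inv_mem_TT ht)))
    (fun t ht t' ht' w => G.comm h ht ht' w)
    (fun t ht w hw => G.pkill h ht hw.1)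
    (by
      intro e he hfix
      have h1 := Phi_fix G.ne hfix e he.1
      rw [he.2.def, C.lam_eq, smul_mul_assoc] at h1
      by_contra h0
      have h2 : (lam - 1) • (e * e) = 0 := by rw [sub_smul, ← h1, one_smul, sub_self]
      rcases smul_eq_zero.1 h2 with h3 | h3
      · exact C.root 1 one_ne_zero (by rw [pow_one]; exact sub_eq_zero.1 h3)
      · exact mul_ne_zero h0 h0 h3)
    (fun t => x - Phi act h t x)
    (by
      intro t ht
      obtain ⟨f, hf⟩ := G.eig t ht
      refine ⟨?_, C.xeig.sub (Phi_eig hf C.xeig)⟩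
      have h1 := G.dp _ le_rfl x h (fun a ha => G.le (C.ore.del a ha)) t (mem_TT ht)
      have h2 : x - Phi act h t x = (x * t - act h t * x) * t⁻¹ := by
        rw [Phi_apply, sub_mul, mul_inv_cancel_right₀ (G.ne t ht), mul_assoc]
      change x - Phi act h t x ∈ _
      rw [h2]
      exact Subalgebra.mul_mem _ h1 (inv_mem_TT ht))
    (by
      intro t ht t' ht'
      simp only [map_sub]
      rw [G.comm h ht ht']; abel)
  refine ⟨g, hg.1, hg.2, ?_⟩
  apply Phi_fix G.ne
  intro t ht
  have h1 : x - Phi act h t x = g - Phi act h t g := hE t ht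
  rw [map_sub]
  rw [sub_eq_sub_iff_sub_eq_sub] at h1
  exact h1.symm

theorem Good.step {A B : Subalgebra K D} {S : Finset D} (G : Good act A S) {x : D} {h : Torus K r}
    {lam : K} {fx : Fin r → ℤ} (C : CStep act A B x h lam fx) :
    ∃ S', Good act B S' := by
  classical
  obtain ⟨g, hg, hgf, hcomm⟩ := G.inner C
  have hxf : IsEigenWith K act fx (x - g) := C.xeig.sub hgf
  have hx0 : x - g ≠ 0 := by
    intro h0
    obtain ⟨u, hu, hu0, hug⟩ := G.frac g hg
    rw [← sub_eq_zero.1 h0] at hug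
    exact C.x_ne hug hu hu0 rfl
  have hTT : TT K S ≤ TT K (insert (x - g) S) := TT_mono (Finset.subset_insert _ _)
  have hx'T : x - g ∈ TT K (insert (x - g) S) := mem_TT (Finset.mem_insert_self _ _)
  have hxT : x ∈ TT K (insert (x - g) S) := by
    have := Subalgebra.add_mem _ hx'T (hTT hg)
    simpa using this
  refine ⟨insert (x - g) S, ?_, ?_, ?_, ?_, ?_, ?_⟩
  · intro t ht
    rcases Finset.mem_insert.1 ht with rfl | ht
    exacts [hx0, G.ne t ht]
  · intro t ht
    rcases Finset.mem_insert.1 ht with rfl | ht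
    exacts [⟨fx, hxf⟩, G.eig t ht]
  · have key : ∀ t ∈ S, ∃ κ : Kˣ, (x - g) * t = (κ : K) • (t * (x - g)) := by
      intro t ht
      obtain ⟨f, hf⟩ := G.eig t ht
      exact ⟨chi f h, by rw [hcomm t (mem_TT ht), hf.def, smul_mul_assoc]⟩
    intro t ht t' ht'
    rcases Finset.mem_insert.1 ht with rfl | ht <;> rcases Finset.mem_insert.1 ht' with rfl | ht'
    · exact ⟨1, by simp⟩
    · obtain ⟨κ, hκ⟩ := key t' ht'
      exact ⟨κ, hκ⟩
    · obtain ⟨κ, hκ⟩ := key t ht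
      exact ⟨((κ⁻¹ : Kˣ) : K), by rw [hκ, smul_smul, ← Units.val_mul]; simp⟩
    · exact G.qc t ht t' ht'
  · intro b hb
    obtain ⟨n, c, hc, rfl⟩ := C.ore.span b hb
    exact Subalgebra.sum_mem _ fun i _ => Subalgebra.mul_mem _ (hTT (G.le (hc i)))
      (Subalgebra.pow_mem _ hxT i)
  · have hA := lore_of_noeth A C.noethA
    have hB := lore_of_noeth B C.noethB
    have h1 : TT K S ≤ Fr B hB := fun d hd => Fr_mono hA hB C.ore.le (G.frac d hd)
    have h2 : ∀ t ∈ insert (x - g) S, t ∈ Fr B hB := by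
      intro t ht
      rcases Finset.mem_insert.1 ht with rfl | ht
      · exact Subalgebra.sub_mem _ (le_Fr hB C.ore.xmem) (h1 hg)
      · exact h1 (mem_TT ht)
    intro d hd
    exact TT_le h2 (fun t ht => Fr_inv hB (h2 t ht)) hd
  · intro T' hT' y ξ hy t ht
    have h1 := G.dp T' (hTT.trans hT') y ξ (fun a ha => hy a (C.ore.le ha))
    have h2 : y * (x - g) - act ξ (x - g) * y ∈ T' := by
      have e : y * (x - g) - act ξ (x - g) * y = (y * x - act ξ x * y) - (y * g - act ξ g * y) := by
        rw [map_sub]; noncomm_ring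
      rw [e]
      exact T'.sub_mem (hy x C.ore.xmem) (h1 g hg)
    have hstT : ∀ s ∈ TT K (insert (x - g) S), act ξ s ∈ TT K (insert (x - g) S) := by
      intro s hs
      induction hs using Algebra.adjoin_induction with
      | mem s hs =>
        have key : ∃ f, IsEigenWith K act f s := by
          rcases hs with hs | ⟨s, hs, rfl⟩ <;> rcases Finset.mem_insert.1 hs with rfl | hs
          · exact ⟨_, hxf⟩
          · exact G.eig s hs
          · exact ⟨_, hxf.inv⟩
          · obtain ⟨f, hf⟩ := G.eig s hs
            exact ⟨_, hf.inv⟩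
        obtain ⟨f, hf⟩ := key
        rw [hf.def]
        exact Subalgebra.smul_mem _ (Algebra.subset_adjoin hs) _
      | algebraMap c => rw [AlgEquiv.commutes]; exact Subalgebra.algebraMap_mem _ _
      | add a b _ _ ha hb => rw [map_add]; exact Subalgebra.add_mem _ ha hb
      | mul a b _ _ ha hb => rw [map_mul]; exact Subalgebra.mul_mem _ ha hb
    induction ht using Algebra.adjoin_induction with
    | mem s hs =>
      rcases hs with hs | ⟨s, hs, rfl⟩ <;> rcases Finset.mem_insert.1 hs with rfl | hs
      · exact h2
      · exact h1 s (mem_TT hs)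
      · change y * (x - g)⁻¹ - act ξ (x - g)⁻¹ * y ∈ T'
        have h3 : act ξ (x - g) ≠ 0 := (map_ne_zero_iff _ (act ξ).injective).2 hx0
        have e : y * (x - g)⁻¹ - act ξ (x - g)⁻¹ * y =
            -(act ξ (x - g)⁻¹ * (y * (x - g) - act ξ (x - g) * y) * (x - g)⁻¹) := by
          rw [map_inv₀, mul_sub, sub_mul, inv_mul_cancel_left₀ h3, ← mul_assoc,
            mul_inv_cancel_right₀ hx0]; abel
        rw [e]
        have h4 : (x - g)⁻¹ ∈ TT K (insert (x - g) S) := inv_mem_TT hs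
        exact T'.neg_mem (T'.mul_mem (T'.mul_mem (hT' (hstT _ h4)) h2) (hT' h4))
      · exact h1 _ (inv_mem_TT hs)
    | algebraMap c =>
      rw [AlgEquiv.commutes, ← Algebra.commutes c y, sub_self]; exact T'.zero_mem
    | add a b _ _ ha hb =>
      have e : y * (a + b) - act ξ (a + b) * y = (y * a - act ξ a * y) + (y * b - act ξ b * y) := by
        rw [map_add]; noncomm_ring
      rw [e]; exact T'.add_mem ha hb
    | mul a b ha' hb' ha hb =>
      have e : y * (a * b) - act ξ (a * b) * y =
          (y * a - act ξ a * y) * b + act ξ a * (y * b - act ξ b * y) := by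
        rw [map_mul]; noncomm_ring
      rw [e]
      exact T'.add_mem (T'.mul_mem ha (hT' hb')) (T'.mul_mem (hT' (hstT a ha')) hb)

theorem Good.base : Good act (⊥ : Subalgebra K D) ∅ := by
  have e : TT K (∅ : Finset D) = ⊥ := by simp [TT]
  refine ⟨by simp, by simp, by simp, by rw [e], ?_, ?_⟩
  · intro d hd
    rw [e] at hd
    exact ⟨1, Subalgebra.one_mem _, one_ne_zero, by simpa using hd⟩
  · intro T' _ x ξ h t ht
    rw [e] at ht
    exact h t ht

end Inner


section SkewDeg
variable {K : Type u} [Field K] {D : Type v} [DivisionRing D] [Algebra K D]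

/-- the skew derivation `a ↦ x a - σ(a) x` -/
def dl (x : D) (σ : D ≃ₐ[K] D) : Module.End K D :=
  LinearMap.mulLeft K x - LinearMap.mulRight K x ∘ₗ σ.toLinearMap

variable {x : D} {σ : D ≃ₐ[K] D}

theorem dl_apply (a : D) : dl x σ a = x * a - σ a * x := rfl

theorem dl_mul (a b : D) : dl x σ (a * b) = dl x σ a * b + σ a * dl x σ b := by
  simp only [dl_apply, map_mul]; noncomm_ring

/-- Gaussian binomials -/
def qb (q : K) : ℕ → ℕ → K
  | 0, _ => 1
  | _ + 1, 0 => 1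
  | n + 1, m + 1 => qb q n (m + 1) + q ^ (n + 1) * qb q (n + 1) m
termination_by n m => n + m

def qf (q : K) (n : ℕ) : K := ∏ i ∈ Finset.range n, (1 - q ^ (i + 1))

theorem qf_succ (q : K) (n : ℕ) : qf q (n + 1) = qf q n * (1 - q ^ (n + 1)) :=
  Finset.prod_range_succ _ _

theorem qb_qf (q : K) (n m : ℕ) : qb q n m * qf q n * qf q m = qf q (n + m) := by
  induction n generalizing m with
  | zero => simp [qb, qf]
  | succ n ih =>
    induction m with
    | zero => simp [qb, qf]
    | succ m ihm =>
      have h1 := ih (m + 1)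
      have e1 : qf q (n + 1 + (m + 1)) = qf q (n + 1 + m) * (1 - q ^ (n + 1 + m + 1)) := qf_succ _ _
      have e2 : n + (m + 1) = n + 1 + m := by ring
      rw [e2] at h1
      rw [qb, e1, qf_succ q n]
      have h3 : (qb q n (m + 1) * qf q n * qf q (m + 1)) * (1 - q ^ (n + 1)) +
          q ^ (n+1) * ((qb q (n + 1) m * qf q (n + 1) * qf q m) * (1 - q ^ (m + 1))) =
          qf q (n + 1 + m) * (1 - q ^ (n + 1 + m + 1)) := by
        rw [h1, ihm]; ring
      rw [← h3, qf_succ q m, qf_succ q n]; ring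

theorem qb_ne {q : K} (hq : ∀ n : ℕ, n ≠ 0 → q ^ n ≠ 1) (n m : ℕ) : qb q n m ≠ 0 := by
  intro h
  have h1 := qb_qf q n m
  rw [h, zero_mul, zero_mul] at h1
  have h2 : qf q (n + m) ≠ 0 := by
    rw [qf, Finset.prod_ne_zero_iff]
    intro i _
    exact sub_ne_zero.2 (hq (i+1) (by omega)).symm
  exact h2 h1.symm

variable {lam : K}

theorem dl_sig (hx : σ x = lam • x) (h0 : lam ≠ 0) (a : D) :
    dl x σ (σ a) = lam⁻¹ • σ (dl x σ a) := by
  simp only [dl_apply, map_sub, map_mul, hx, smul_mul_assoc, mul_smul_comm, smul_sub, smul_smul,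
    inv_mul_cancel₀ h0, one_smul]

theorem dlpow_sig (hx : σ x = lam • x) (h0 : lam ≠ 0) (n : ℕ) (a : D) :
    (dl x σ ^ n) (σ a) = (lam⁻¹) ^ n • σ ((dl x σ ^ n) a) := by
  induction n with
  | zero => simp
  | succ n ih =>
    rw [pow_succ', Module.End.mul_apply, ih, map_smul, dl_sig hx h0, smul_smul, ← pow_succ,
      Module.End.mul_apply]

theorem dl_sigpow (hx : σ x = lam • x) (h0 : lam ≠ 0) (m : ℕ) (a : D) :
    dl x σ ((σ ^ m) a) = (lam⁻¹) ^ m • (σ ^ m) (dl x σ a) := by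
  induction m with
  | zero => simp
  | succ n ih =>
    rw [pow_succ' σ, AlgEquiv.mul_apply, dl_sig hx h0, ih, map_smul, smul_smul, ← pow_succ',
      AlgEquiv.mul_apply]

theorem dl_leib (hx : σ x = lam • x) (h0 : lam ≠ 0) (n : ℕ) :
    ∀ (m : ℕ) (a b : D), (dl x σ ^ (n + 1)) a = 0 → (dl x σ ^ (m + 1)) b = 0 →
      (dl x σ ^ (n + m)) (a * b) =
        qb lam⁻¹ n m • ((σ ^ m) ((dl x σ ^ n) a) * (dl x σ ^ m) b) := by
  induction n with
  | zero =>
    intro m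
    induction m with
    | zero => intro a b _ _; simp [qb]
    | succ m ih =>
      intro a b ha hb
      have ha' : dl x σ a = 0 := by simpa using ha
      have h1 : (dl x σ ^ (0 + 1)) (σ a) = 0 := by
        rw [dlpow_sig hx h0, ha]; simp
      have h2 := ih (σ a) (dl x σ b) h1 (by rwa [← Module.End.mul_apply, ← pow_succ])
      rw [← add_assoc, pow_succ, Module.End.mul_apply, dl_mul, ha', zero_mul, zero_add (σ a * _), h2,
        pow_succ σ, AlgEquiv.mul_apply, pow_succ (dl x σ) m, Module.End.mul_apply]
      simp [qb]
  | succ n ihn =>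
    intro m
    induction m with
    | zero =>
      intro a b ha hb
      have hb' : dl x σ b = 0 := by simpa using hb
      have h2 := ihn 0 (dl x σ a) b (by rwa [← Module.End.mul_apply, ← pow_succ]) hb
      simp only [add_zero] at h2 ⊢
      rw [pow_succ, Module.End.mul_apply, dl_mul, hb', mul_zero, add_zero, h2,
        Module.End.mul_apply]
      cases n <;> simp [qb]
    | succ m ihm =>
      intro a b ha hb
      have h1 := ihn (m + 1) (dl x σ a) b (by rwa [← Module.End.mul_apply, ← pow_succ]) hb
      have h2 := ihm (σ a) (dl x σ b) (by rw [dlpow_sig hx h0, ha]; simp)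
        (by rwa [← Module.End.mul_apply, ← pow_succ])
      have e : n + 1 + (m + 1) = (n + 1 + m) + 1 := by ring
      have e' : n + (m + 1) = n + 1 + m := by ring
      rw [e'] at h1
      rw [e, pow_succ, Module.End.mul_apply, dl_mul, map_add, h1, h2, dlpow_sig hx h0, map_smul,
        ← AlgEquiv.mul_apply (σ ^ m) σ, ← pow_succ σ, ← Module.End.mul_apply (dl x σ ^ n),
        ← Module.End.mul_apply (dl x σ ^ m), ← pow_succ, ← pow_succ, smul_mul_assoc, smul_smul,
        ← add_smul, qb, mul_comm (qb _ (n+1) m)]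

/-- `a` has exact `δ`-degree `n`. -/
def HasDeg (x : D) (σ : D ≃ₐ[K] D) (a : D) (n : ℕ) : Prop :=
  (dl x σ ^ n) a ≠ 0 ∧ (dl x σ ^ (n + 1)) a = 0

theorem dlpow_zero_mono {n m : ℕ} (h : n ≤ m) {a : D} (ha : (dl x σ ^ n) a = 0) :
    (dl x σ ^ m) a = 0 := by
  obtain ⟨k, rfl⟩ := Nat.exists_eq_add_of_le h
  rw [add_comm, pow_add, Module.End.mul_apply, ha, map_zero]

theorem HasDeg.mul (hx : σ x = lam • x) (h0 : lam ≠ 0) (hq : ∀ n : ℕ, n ≠ 0 → lam ^ n ≠ 1)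
    {a b : D} {n m : ℕ} (ha : HasDeg x σ a n) (hb : HasDeg x σ b m) :
    HasDeg x σ (a * b) (n + m) := by
  have hq' : ∀ n : ℕ, n ≠ 0 → lam⁻¹ ^ n ≠ 1 := by
    intro n hn h
    rw [inv_pow, inv_eq_one] at h
    exact hq n hn h
  have h1 := dl_leib hx h0 n m a b ha.2 hb.2
  constructor
  · rw [h1]
    exact smul_ne_zero (qb_ne hq' n m) (mul_ne_zero
      ((map_ne_zero_iff _ (σ ^ m).injective).2 ha.1) hb.1)
  · have ha2 := ha.2
    have hb2 := hb.2
    rw [pow_succ', Module.End.mul_apply] at ha2 hb2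
    rw [pow_succ', Module.End.mul_apply, h1, map_smul, dl_mul, dl_sigpow hx h0, ha2, hb2]
    simp

theorem HasDeg.unique {a : D} {n m : ℕ} (ha : HasDeg x σ a n) (hb : HasDeg x σ a m) : n = m := by
  by_contra h
  rcases Nat.lt_or_gt_of_ne h with h | h
  · exact hb.1 (dlpow_zero_mono h ha.2)
  · exact ha.1 (dlpow_zero_mono h hb.2)

theorem exists_deg {a : D} (h0 : a ≠ 0) (hn : ∃ n, (dl x σ ^ n) a = 0) : ∃ n, HasDeg x σ a n := by
  classical
  have h1 := Nat.find_spec hn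
  have h2 := fun m => Nat.find_min hn (m := m)
  cases h : Nat.find hn with
  | zero => rw [h] at h1; exact absurd (by simpa using h1) h0
  | succ n =>
    rw [h] at h1 h2
    exact ⟨n, h2 n (Nat.lt_succ_self n), h1⟩

theorem HasDeg.of_dl {a : D} {n : ℕ} (ha : HasDeg x σ a (n + 1)) : HasDeg x σ (dl x σ a) n :=
  ⟨by rw [← Module.End.mul_apply, ← pow_succ]; exact ha.1,
   by rw [← Module.End.mul_apply, ← pow_succ]; exact ha.2⟩

theorem HasDeg.pos {a : D} {n : ℕ} (ha : HasDeg x σ a n) (h : dl x σ a ≠ 0) : ∃ m, n = m + 1 := by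
  cases n with
  | zero => exact absurd (by simpa using ha.2) h
  | succ n => exact ⟨n, rfl⟩

theorem dl_eq_zero_of_left (hx : σ x = lam • x) (h0 : lam ≠ 0) (hq : ∀ n : ℕ, n ≠ 0 → lam ^ n ≠ 1)
    {c w : D} (hc : ∃ n, (dl x σ ^ n) c = 0) (hw : ∃ n, (dl x σ ^ n) w = 0)
    (h : dl x σ c = w * c ∨ dl x σ c = c * w) : dl x σ c = 0 := by
  by_contra hne
  have hc0 : c ≠ 0 := by rintro rfl; simp at hne
  have hw0 : w ≠ 0 := by rintro rfl; simp at h; exact hne h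
  obtain ⟨n, hn⟩ := exists_deg hc0 hc
  obtain ⟨m, hm⟩ := exists_deg hw0 hw
  obtain ⟨n, rfl⟩ := hn.pos hne
  have h1 := hn.of_dl
  rcases h with h | h
  · rw [h] at h1
    have := h1.unique (hm.mul hx h0 hq hn); omega
  · rw [h] at h1
    have := h1.unique (hn.mul hx h0 hq hm); omega

theorem dl_two_ne (hx : σ x = lam • x) (h0 : lam ≠ 0) (hq : ∀ n : ℕ, n ≠ 0 → lam ^ n ≠ 1)
    {a b c : D} (ha : ∃ n, (dl x σ ^ n) a = 0) (hb : ∃ n, (dl x σ ^ n) b = 0)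
    (hc : ∃ n, (dl x σ ^ n) c = 0) (ha1 : dl x σ a ≠ 0) (hb1 : dl x σ b ≠ 0) (hc0 : c ≠ 0) :
    dl x σ (dl x σ (a * (b * c))) ≠ 0 := by
  obtain ⟨n, hn⟩ := exists_deg (by rintro rfl; simp at ha1) ha
  obtain ⟨m, hm⟩ := exists_deg (by rintro rfl; simp at hb1) hb
  obtain ⟨k, hk⟩ := exists_deg hc0 hc
  obtain ⟨n, rfl⟩ := hn.pos ha1
  obtain ⟨m, rfl⟩ := hm.pos hb1
  have h1 := hn.mul hx h0 hq (hm.mul hx h0 hq hk)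
  intro h
  apply h1.1
  apply dlpow_zero_mono (n := 2) (by omega)
  rw [pow_two, Module.End.mul_apply, h]

end SkewDeg


section HPrimes
variable {K : Type u} [Field K] {D : Type v} [DivisionRing D] [Algebra K D] {r : ℕ}

/-- nonzero normal eigenvectors of `A` -/
structure NE (act : Torus K r →* (D ≃ₐ[K] D)) (A : Subalgebra K D) (p : D) : Prop where
  mem : p ∈ A
  ne : p ≠ 0
  cl : ∀ a ∈ A, p⁻¹ * a * p ∈ A
  cr : ∀ a ∈ A, p * a * p⁻¹ ∈ A
  eig : ∃ f, IsEigenWith K act f p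

/-- homogeneous primes of `A` -/
structure HP (act : Torus K r →* (D ≃ₐ[K] D)) (A : Subalgebra K D) (p : D) : Prop
    extends NE act A p where
  ninv : p⁻¹ ∉ A
  pr : ∀ a ∈ A, ∀ b ∈ A, p⁻¹ * (a * b) ∈ A → p⁻¹ * a ∈ A ∨ p⁻¹ * b ∈ A

variable {act : Torus K r →* (D ≃ₐ[K] D)} {A : Subalgebra K D}

theorem NE.one : NE act A 1 :=
  ⟨A.one_mem, one_ne_zero, by simp, by simp, ⟨0, IsEigenWith.one'⟩⟩

theorem NE.mul {p q : D} (hp : NE act A p) (hq : NE act A q) : NE act A (p * q) := by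
  refine ⟨A.mul_mem hp.mem hq.mem, mul_ne_zero hp.ne hq.ne, fun a ha => ?_, fun a ha => ?_, ?_⟩
  · have := hq.cl _ (hp.cl a ha)
    rw [mul_inv_rev]; simpa only [mul_assoc] using this
  · have := hp.cr _ (hq.cr a ha)
    rw [mul_inv_rev]; simpa only [mul_assoc] using this
  · obtain ⟨f, hf⟩ := hp.eig
    obtain ⟨g, hg⟩ := hq.eig
    exact ⟨_, hf.mul hg⟩

theorem NE.prod {l : List D} (h : ∀ p ∈ l, HP act A p) : NE act A l.prod := by
  induction l with
  | nil => exact NE.one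
  | cons a l ih =>
    rw [List.prod_cons]
    exact (h a (by simp)).toNE.mul (ih fun p hp => h p (by simp [hp]))

/-- `a ∈ pA` iff `a ∈ Ap` -/
theorem NE.inv_mul_iff {p : D} (hp : NE act A p) {a : D} : p⁻¹ * a ∈ A ↔ a * p⁻¹ ∈ A := by
  constructor
  · intro h
    have := hp.cr _ h
    rwa [mul_inv_cancel_left₀ hp.ne] at this
  · intro h
    have := hp.cl _ h
    rwa [mul_assoc, inv_mul_cancel_right₀ hp.ne] at this

theorem HP.conj {p n : D} (hp : HP act A p) (hn : NE act A n) : HP act A (n⁻¹ * p * n) := by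
  have hn0 := hn.ne
  have hp0 := hp.ne
  have hinv : (n⁻¹ * p * n)⁻¹ = n⁻¹ * p⁻¹ * n := by
    rw [mul_inv_rev, mul_inv_rev, inv_inv, mul_assoc]
  have key : ∀ a, n * (n⁻¹ * p⁻¹ * n * a) * n⁻¹ = p⁻¹ * (n * a * n⁻¹) := by
    intro a
    simp only [mul_assoc, mul_inv_cancel_left₀ hn0]
  have key2 : ∀ a, n⁻¹ * (p⁻¹ * (n * a * n⁻¹)) * n = n⁻¹ * p⁻¹ * n * a := by
    intro a
    simp only [mul_assoc, inv_mul_cancel₀ hn0, mul_one]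
  refine ⟨⟨hn.cl p hp.mem, ?_, ?_, ?_, ?_⟩, ?_, ?_⟩
  · exact mul_ne_zero (mul_ne_zero (inv_ne_zero hn0) hp0) hn0
  · intro a ha
    have := hn.cl _ (hp.cl _ (hn.cr a ha))
    rw [hinv]
    simpa only [mul_assoc, inv_mul_cancel₀ hn0, mul_one, mul_inv_cancel_left₀ hn0,
      inv_mul_cancel_left₀ hn0] using this
  · intro a ha
    have := hn.cl _ (hp.cr _ (hn.cr a ha))
    rw [hinv]
    simpa only [mul_assoc, inv_mul_cancel₀ hn0, mul_one, mul_inv_cancel_left₀ hn0,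
      inv_mul_cancel_left₀ hn0] using this
  · obtain ⟨f, hf⟩ := hp.eig
    obtain ⟨g, hg⟩ := hn.eig
    exact ⟨_, (hg.inv.mul hf).mul hg⟩
  · intro h
    rw [hinv] at h
    have := hn.cr _ h
    apply hp.ninv
    simpa only [mul_assoc, mul_inv_cancel₀ hn0, mul_one, mul_inv_cancel_left₀ hn0] using this
  · intro a ha b hb h
    rw [hinv] at h ⊢
    have h1 := hn.cr _ h
    rw [key] at h1
    have e : n * (a * b) * n⁻¹ = (n * a * n⁻¹) * (n * b * n⁻¹) := by
      simp only [mul_assoc, inv_mul_cancel_left₀ hn0]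
    rw [e] at h1
    rcases hp.pr _ (hn.cr a ha) _ (hn.cr b hb) h1 with h2 | h2
    · left; have := hn.cl _ h2; rwa [key2] at this
    · right; have := hn.cl _ h2; rwa [key2] at this

theorem prod_conj (q : D) (hq : q ≠ 0) (l : List D) :
    (l.map fun p => q⁻¹ * p * q).prod = q⁻¹ * l.prod * q := by
  induction l with
  | nil => simp [hq]
  | cons a l ih =>
    rw [List.map_cons, List.prod_cons, ih, List.prod_cons]
    simp only [mul_assoc, mul_inv_cancel_left₀ hq]

theorem HP.front {l : List D} (h : ∀ p ∈ l, HP act A p) {q : D} (hq : q ∈ l) :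
    ∃ l' : List D, (∀ p ∈ l', HP act A p) ∧ l'.length + 1 = l.length ∧ l.prod = q * l'.prod := by
  obtain ⟨l1, l2, rfl⟩ := List.append_of_mem hq
  have hqq := h q hq
  refine ⟨(l1.map fun p => q⁻¹ * p * q) ++ l2, ?_, ?_, ?_⟩
  · intro p hp
    rcases List.mem_append.1 hp with hp | hp
    · obtain ⟨p', hp', rfl⟩ := List.mem_map.1 hp
      exact (h p' (by simp [hp'])).conj hqq.toNE
    · exact h p (by simp [hp])
  · simp; omega
  · rw [List.prod_append, List.prod_append, List.prod_cons, prod_conj q hqq.ne]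
    simp only [mul_assoc, mul_inv_cancel_left₀ hqq.ne]

theorem HP.cancel {l : List D} (h : ∀ p ∈ l, HP act A p) {c : D} (hc : c ∈ A)
    (hn : ∀ p ∈ l, p⁻¹ * c ∉ A) : ∀ v ∈ A, l.prod⁻¹ * (v * c) ∈ A → l.prod⁻¹ * v ∈ A := by
  induction l with
  | nil => intro v hv _; simpa using hv
  | cons p l ih =>
    intro v hv hvc
    have hp := h p (by simp)
    have hL := NE.prod (fun q hq => h q (by simp [hq]) : ∀ q ∈ l, HP act A q)
    rw [List.prod_cons, mul_inv_rev, mul_assoc] at hvc ⊢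
    have h1 : p⁻¹ * (v * c) ∈ A := by
      have := A.mul_mem hL.mem hvc
      rwa [mul_inv_cancel_left₀ hL.ne] at this
    rcases hp.pr v hv c hc h1 with h2 | h2
    · apply ih (fun q hq => h q (by simp [hq])) (fun q hq => hn q (by simp [hq])) _ h2
      rwa [mul_assoc]
    · exact absurd h2 (hn p (by simp))

/-- `H`-stable two-sided ideals of `A` -/
structure HId (act : Torus K r →* (D ≃ₐ[K] D)) (A : Subalgebra K D) (I : Submodule K D) : Prop where
  le : ∀ a ∈ I, a ∈ A
  left : ∀ a ∈ A, ∀ b ∈ I, a * b ∈ I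
  right : ∀ a ∈ A, ∀ b ∈ I, b * a ∈ I
  st : ∀ ξ, ∀ b ∈ I, act ξ b ∈ I

def HU (act : Torus K r →* (D ≃ₐ[K] D)) (A : Subalgebra K D) : Prop :=
  ∀ I : Submodule K D, HId act A I → (∃ b ∈ I, b ≠ 0) →
    ∃ l : List D, (∀ p ∈ l, HP act A p) ∧ l.prod ∈ I

theorem HU.base : HU act (⊥ : Subalgebra K D) := by
  rintro I hI ⟨b, hb, hb0⟩
  obtain ⟨c, rfl⟩ := Algebra.mem_bot.1 (hI.le b hb)
  have hc : c ≠ 0 := by rintro rfl; simp at hb0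
  refine ⟨[], by simp, ?_⟩
  have := I.smul_mem c⁻¹ hb
  rw [Algebra.algebraMap_eq_smul_one, smul_smul, inv_mul_cancel₀ hc, one_smul] at this
  simpa using this

variable {B : Subalgebra K D} {x : D} {h : Torus K r} {lam : K} {fx : Fin r → ℤ}

/-- The data attached to a step: the inner element `g`, the denominator `u`, with `σ(u) = s u`. -/
structure SD (act : Torus K r →* (D ≃ₐ[K] D)) (A : Subalgebra K D) (x : D) (h : Torus K r)
    (lam : K) (fx : Fin r → ℤ) (g u : D) (s : K) : Prop where
  une : NE act A u
  su : act h u = s • u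
  s0 : s ≠ 0
  geig : IsEigenWith K act fx g
  ugA : u * g ∈ A
  gu : g * u = (lam * s) • (u * g)
  sat : ∀ a ∈ A, u⁻¹ * (a * (u * g)) ∈ A → u⁻¹ * a ∈ A
  hp : u = 1 ∨ HP act A u
  inn : ∀ t ∈ A, (x - g) * t = act h t * (x - g)
  inng : (x - g) * g = lam • (g * (x - g))

theorem CStep.nil' (C : CStep act A B x h lam fx) {a : D} (ha : a ∈ A) :
    ∃ n, (dl x (act h) ^ n) a = 0 := by
  obtain ⟨n, hn⟩ := C.nil a ha
  exact ⟨n, by rw [Module.End.coe_pow]; exact hn⟩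

theorem CStep.lam0 (C : CStep act A B x h lam fx) : lam ≠ 0 := by
  rw [← C.lam_eq]; exact Units.ne_zero _

theorem CStep.exists_SD (C : CStep act A B x h lam fx) {S : Finset D} (G : Good act A S)
    (hU : HU act A) : ∃ g u s, SD act A x h lam fx g u s := by
  obtain ⟨g, hg, hgf, hcomm⟩ := G.inner C
  have hsg : act h g = lam • g := by rw [hgf.def, C.lam_eq]
  have inng : (x - g) * g = lam • (g * (x - g)) := by rw [hcomm g hg, hsg, smul_mul_assoc]
  have inn : ∀ t ∈ A, (x - g) * t = act h t * (x - g) := fun t ht => hcomm t (G.le ht)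
  have lam0 := C.lam0
  have lam1 : lam ≠ 1 := by simpa using C.root 1 one_ne_zero
  by_cases hg0 : g = 0
  · subst hg0
    exact ⟨0, 1, 1, NE.one, by simp, one_ne_zero, hgf, by simp, by simp, by simp, Or.inl rfl, inn,
      inng⟩
  have hdl : ∀ t ∈ A, dl x (act h) t = g * t - act h t * g := by
    intro t ht
    have := inn t ht
    rw [sub_mul, mul_sub, sub_eq_sub_iff_sub_eq_sub] at this
    rw [dl_apply, this]
  let I : Submodule K D :=
    { carrier := {a | a ∈ A ∧ a * g ∈ A}
      zero_mem' := ⟨A.zero_mem, by simp⟩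
      add_mem' := fun ha hb => ⟨A.add_mem ha.1 hb.1, by rw [add_mul]; exact A.add_mem ha.2 hb.2⟩
      smul_mem' := fun c a ha => ⟨A.smul_mem ha.1 c, by
        rw [smul_mul_assoc]; exact A.smul_mem ha.2 c⟩ }
  have hI : HId act A I := by
    refine ⟨fun a ha => ha.1, fun a ha b hb => ⟨A.mul_mem ha hb.1, ?_⟩,
      fun a ha b hb => ⟨A.mul_mem hb.1 ha, ?_⟩, fun ξ b hb => ⟨C.stab ξ b hb.1, ?_⟩⟩
    · rw [mul_assoc]; exact A.mul_mem ha hb.2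
    · -- (b*a)*g = b*(g a' - δ a')
      have ha' : (act h).symm a ∈ A := C.ore.sigs a ha
      have h1 := hdl _ ha'
      rw [AlgEquiv.apply_symm_apply] at h1
      have h2 : b * a * g = b * g * (act h).symm a - b * dl x (act h) ((act h).symm a) := by
        rw [h1]; noncomm_ring
      rw [h2]
      exact A.sub_mem (A.mul_mem hb.2 ha') (A.mul_mem hb.1 (C.ore.del _ ha'))
    · have h1 := C.stab ξ _ hb.2
      rw [map_mul, hgf.def, mul_smul_comm] at h1
      have := A.smul_mem h1 (((chi fx ξ)⁻¹ : Kˣ) : K)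
      rw [smul_smul, ← Units.val_mul] at this
      simpa using this
  have hI0 : ∃ b ∈ I, b ≠ 0 := by
    obtain ⟨u, hu, hu0, hug⟩ := G.frac g hg
    exact ⟨u, ⟨hu, hug⟩, hu0⟩
  have hex : ∃ n : ℕ, ∃ l : List D, l.length = n ∧ (∀ p ∈ l, HP act A p) ∧ l.prod ∈ I := by
    obtain ⟨l, hl, hlI⟩ := hU I hI hI0
    exact ⟨l.length, l, rfl, hl, hlI⟩
  classical
  obtain ⟨l, hlen, hl, hlI⟩ := Nat.find_spec hex
  have hmin : ∀ l' : List D, (∀ p ∈ l', HP act A p) → l'.prod ∈ I → l.length ≤ l'.length := by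
    intro l' h1 h2
    rw [hlen]
    exact Nat.find_min' hex ⟨l', rfl, h1, h2⟩
  clear hlen
  have hune : NE act A l.prod := NE.prod hl
  obtain ⟨fu, hfu⟩ := hune.eig
  set u := l.prod with hu
  have hu0 := hune.ne
  set s : K := (chi fu h : K) with hs
  have hs0 : s ≠ 0 := Units.ne_zero _
  have hsu : act h u = s • u := hfu.def h
  have hc : u * g ∈ A := hlI.2
  have hc0 : u * g ≠ 0 := mul_ne_zero hu0 hg0
  have hndiv : ∀ p ∈ l, p⁻¹ * (u * g) ∉ A := by
    intro p hp hdiv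
    obtain ⟨l', hl', hlen, hprod⟩ := HP.front hl hp
    rw [← hu] at hprod
    rw [hprod, mul_assoc, inv_mul_cancel_left₀ (hl p hp).ne] at hdiv
    have := hmin l' hl' ⟨(NE.prod hl').mem, hdiv⟩
    omega
  have hsc : act h (u * g) = (lam * s) • (u * g) := by
    rw [map_mul, hsu, hsg, smul_mul_smul_comm, mul_comm]
  set τc := u * (u * g) * u⁻¹ with hτc
  have hτA : τc ∈ A := hune.cr _ hc
  have hdc : dl x (act h) (u * g) = u⁻¹ * ((u * g - (lam * s) • τc) * (u * g)) := by
    rw [hdl _ hc, hsc, hτc]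
    have e1 : (u * g - (lam * s) • (u * (u * g) * u⁻¹)) * (u * g) =
        u * (g * (u * g) - ((lam * s) • (u * g)) * g) := by
      rw [sub_mul, smul_mul_assoc, smul_mul_assoc, mul_sub, mul_smul_comm]
      congr 1
      · noncomm_ring
      · congr 1
        simp only [mul_assoc, inv_mul_cancel_left₀ hu0]
    rw [e1, inv_mul_cancel_left₀ hu0]
  have hv : u * g - (lam * s) • τc ∈ A := A.sub_mem hc (A.smul_mem hτA _)
  have hw : u⁻¹ * (u * g - (lam * s) • τc) ∈ A := by
    apply HP.cancel hl hc hndiv _ hv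
    rw [← hu, ← hdc]
    exact C.ore.del _ hc
  have hdc0 : dl x (act h) (u * g) = 0 :=
    dl_eq_zero_of_left C.hlam lam0 C.root (C.nil' hc) (C.nil' hw)
      (Or.inl (by rw [hdc, mul_assoc]))
  have hgu : g * u = (lam * s) • (u * g) := by
    rw [hdc] at hdc0
    have h1 : u * g - (lam * s) • τc = 0 := by
      rcases mul_eq_zero.1 hdc0 with h | h
      · exact absurd h (inv_ne_zero hu0)
      · exact (mul_eq_zero.1 h).resolve_right hc0
    have h2 : u * (g * u) = u * ((lam * s) • (u * g)) := by
      have h3 : u * g * u = ((lam * s) • τc) * u := by rw [sub_eq_zero.1 h1]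
      rw [← mul_assoc, h3, hτc, smul_mul_assoc, inv_mul_cancel_right₀ hu0, mul_smul_comm]
    exact mul_left_cancel₀ hu0 h2
  have hdu : dl x (act h) u = ((lam - 1) * s) • (u * g) := by
    rw [hdl u hune.mem, hgu, hsu, smul_mul_assoc, ← sub_smul]; congr 1; ring
  have hk0 : (lam - 1) * s ≠ 0 := mul_ne_zero (sub_ne_zero.2 lam1) hs0
  have hpne : ∀ p ∈ l, dl x (act h) p ≠ 0 := by
    intro p hp hd
    obtain ⟨l', hl', hlen, hprod⟩ := HP.front hl hp
    rw [← hu] at hprod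
    have hL := NE.prod hl'
    obtain ⟨fp, hfp⟩ := (hl p hp).eig
    rw [hprod, dl_mul, hd, zero_mul, zero_add, hfp.def, ← hprod, smul_mul_assoc] at hdu
    apply hndiv p hp
    have h1 : u * g = ((lam - 1) * s)⁻¹ • ((chi fp h : K) • (p * dl x (act h) l'.prod)) := by
      rw [hdu, smul_smul, inv_mul_cancel₀ hk0, one_smul]
    rw [h1, mul_smul_comm, mul_smul_comm, inv_mul_cancel_left₀ (hl p hp).ne]
    exact A.smul_mem (A.smul_mem (C.ore.del _ hL.mem) _) _
  have hddu : dl x (act h) (dl x (act h) u) = 0 := by rw [hdu, map_smul, hdc0, smul_zero]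
  have hfin : HP act A u ∧ u⁻¹ * (u * g) ∉ A := by
    match l, hl, hpne, hndiv, hu with
    | [], _, _, _, hu =>
      exfalso
      have hu1 : u = 1 := by simpa using hu
      rw [hu1] at hgu hsu
      have hs1 : s = 1 := by
        have : (s - 1) • (1 : D) = 0 := by rw [sub_smul, ← hsu]; simp
        rcases smul_eq_zero.1 this with h | h
        · exact sub_eq_zero.1 h
        · exact absurd h one_ne_zero
      rw [hs1, mul_one, mul_one, one_mul] at hgu
      have : (lam - 1) • g = 0 := by rw [sub_smul, ← hgu]; simp
      rcases smul_eq_zero.1 this with h | h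
      · exact lam1 (sub_eq_zero.1 h)
      · exact hg0 h
    | [p], hl, _, hnd, hu =>
      have hu1 : u = p := by simpa using hu
      rw [hu1]
      exact ⟨hl p (by simp), hu1 ▸ hnd p (by simp)⟩
    | p :: q :: l', hl, hpne, _, hu =>
      exfalso
      have hL := NE.prod (fun t ht => hl t (by simp [ht]) : ∀ t ∈ l', HP act A t)
      have hp := hl p (by simp)
      have hq := hl q (by simp)
      refine dl_two_ne C.hlam lam0 C.root (C.nil' hp.mem) (C.nil' hq.mem) (C.nil' hL.mem)
        (hpne p (by simp)) (hpne q (by simp)) hL.ne ?_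
      rw [List.prod_cons, List.prod_cons] at hu
      rw [← hu]; exact hddu
  refine ⟨g, u, s, hune, hsu, hs0, hgf, hc, hgu, ?_, Or.inr hfin.1, inn, inng⟩
  intro a ha hac
  exact (hfin.1.pr a ha _ hc hac).resolve_right hfin.2

end HPrimes


section Lift

theorem OreStep.ind {K : Type u} [Field K] {M : Type v} [Ring M] [Algebra K M]
    {A B : Subalgebra K M} {x : M} {σ : M ≃ₐ[K] M} (H : OreStep A B x σ)
    {P : M → Prop} (hA : ∀ a ∈ A, P a) (hadd : ∀ a ∈ B, ∀ b ∈ B, P a → P b → P (a + b))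
    (hx : ∀ b ∈ B, P b → P (b * x)) : ∀ b ∈ B, P b := by
  intro b hb
  have h1 : ∀ a ∈ A, ∀ n : ℕ, P (a * x ^ n) := by
    intro a ha n
    induction n with
    | zero => simpa using hA a ha
    | succ n ih =>
      rw [pow_succ, ← mul_assoc]
      exact hx _ (B.mul_mem (H.le ha) (B.pow_mem H.xmem n)) ih
  have h2 : ∀ n, ∀ f ∈ LTn A x n, P f := by
    intro n
    induction n with
    | zero => intro f hf; rw [LTn_zero hf]; exact hA 0 A.zero_mem
    | succ n ih =>
      intro f hf
      obtain ⟨f', hf', a, ha, rfl⟩ := mem_LTn_succ.1 hf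
      exact hadd _ (H.LTn_le hf') _ (B.mul_mem (H.le ha) (B.pow_mem H.xmem n)) (ih _ hf') (h1 a ha n)
  obtain ⟨n, hn⟩ := H.span b hb
  exact h2 n b hn

variable {K : Type u} [Field K] {D : Type v} [DivisionRing D] [Algebra K D] {r : ℕ}
variable {act : Torus K r →* (D ≃ₐ[K] D)} {A B : Subalgebra K D}
variable {x : D} {h : Torus K r} {lam : K} {fx : Fin r → ℤ} {σ : D ≃ₐ[K] D}

theorem OreStep.deg_of_mul (H : OreStep A B x σ) {p b : D} (hp : p ∈ A) (hp0 : p ≠ 0) (hb : b ∈ B)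
    {n : ℕ} (h : p * b ∈ LTn A x n) : b ∈ LTn A x n := by
  by_cases hb0 : b = 0
  · rw [hb0]; exact Submodule.zero_mem _
  obtain ⟨m, f, hf, a, ha, ha0, rfl⟩ := H.exists_lead hb hb0
  by_cases hmn : m < n
  · exact LTn_mono hmn (mem_LTn_succ.2 ⟨f, hf, a, ha, rfl⟩)
  · exfalso
    push Not at hmn
    rw [mul_add, ← mul_assoc] at h
    have := H.lead_mem (LTn_mul_left hp hf) (A.mul_mem hp ha) (LTn_mono hmn h)
    exact (mul_ne_zero hp0 ha0) this

theorem OreStep.coef (H : OreStep A B x σ) {p f a : D} {n : ℕ} (hp : p ∈ A) (hp0 : p ≠ 0)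
    (hf : f ∈ LTn A x n) (ha : a ∈ A) (h : p⁻¹ * (f + a * x ^ n) ∈ B) : p⁻¹ * a ∈ A := by
  have h1 : p⁻¹ * (f + a * x ^ n) ∈ LTn A x (n+1) := by
    apply H.deg_of_mul hp hp0 h
    rw [mul_inv_cancel_left₀ hp0]
    exact mem_LTn_succ.2 ⟨f, hf, a, ha, rfl⟩
  obtain ⟨f', hf', b, hb, e⟩ := mem_LTn_succ.1 h1
  have e2 : f + a * x ^ n = p * f' + p * b * x ^ n := by
    rw [mul_assoc, ← mul_add, ← e, mul_inv_cancel_left₀ hp0]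
  have e3 : (p * f' - f) + (p * b - a) * x ^ n = 0 := by
    have : (p * f' - f) + (p * b - a) * x ^ n = (p * f' + p * b * x ^ n) - (f + a * x ^ n) := by
      noncomm_ring
    rw [this, e2, sub_self]
  have := H.lead_mem (Submodule.sub_mem _ (LTn_mul_left hp hf') hf)
    (A.sub_mem (A.mul_mem hp hb) ha) (by rw [e3]; exact Submodule.zero_mem _)
  rw [← sub_eq_zero.1 this, inv_mul_cancel_left₀ hp0]
  exact hb

theorem OreStep.strip (H : OreStep A B x σ) {p : D} : ∀ n, ∀ b ∈ LTn A x n, p⁻¹ * b ∉ B →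
    ∃ m, ∃ f ∈ LTn A x m, ∃ a ∈ A, ∃ w ∈ B, p⁻¹ * a ∉ A ∧ p⁻¹ * w ∈ B ∧ b = w + (f + a * x ^ m) := by
  intro n
  induction n with
  | zero => intro b hb hn; rw [LTn_zero hb] at hn; simp at hn
  | succ n ih =>
    intro b hb hn
    obtain ⟨f, hf, a, ha, rfl⟩ := mem_LTn_succ.1 hb
    by_cases hpa : p⁻¹ * a ∈ A
    · have h1 : p⁻¹ * (a * x ^ n) ∈ B := by
        rw [← mul_assoc]; exact B.mul_mem (H.le hpa) (B.pow_mem H.xmem n)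
      obtain ⟨m, f', hf', a', ha', w, hw, h2, h3, rfl⟩ := ih f hf (by
        intro h2; apply hn; rw [mul_add]; exact B.add_mem h2 h1)
      refine ⟨m, f', hf', a', ha', w + a * x ^ n, ?_, h2, ?_, by abel⟩
      · exact B.add_mem hw (B.mul_mem (H.le ha) (B.pow_mem H.xmem n))
      · rw [mul_add]; exact B.add_mem h3 h1
    · exact ⟨n, f, hf, a, ha, 0, B.zero_mem, hpa, by simp, by simp⟩

/-- good homogeneous primes extend -/
theorem SD.dlp (C : CStep act A B x h lam fx) {g u : D} {s : K} (E : SD act A x h lam fx g u s)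
    {p : D} (hp : HP act A p) (hgood : p⁻¹ * u ∉ A) : dl x (act h) p = 0 := by
  obtain ⟨f, hf⟩ := hp.eig
  have hsp := hf.def h
  have hu0 := E.une.ne
  have e1 : u * dl x (act h) p = u * g * p - (chi f h : K) • (u * p * u⁻¹ * (u * g)) := by
    have := E.inn p hp.mem
    rw [hsp] at this
    rw [dl_apply, hsp]
    have e : x * p - (chi f h : K) • p * x = g * p - (chi f h : K) • p * g := by
      rw [sub_mul, mul_sub] at this
      have e' : x * p = (chi f h : K) • p * x - (chi f h : K) • p * g + g * p := by
        rw [← this]; abel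
      rw [e']; abel
    rw [e]
    simp only [mul_sub, mul_assoc, inv_mul_cancel_left₀ hu0, smul_mul_assoc, mul_smul_comm]
  have h1 : p⁻¹ * (u * p * u⁻¹) ∈ A := by
    have : p⁻¹ * ((u * p * u⁻¹) * u) ∈ A := by
      rw [inv_mul_cancel_right₀ hu0, ← mul_assoc]
      exact hp.cl u E.une.mem
    exact (hp.pr _ (E.une.cr p hp.mem) u E.une.mem this).resolve_right hgood
  have h2 : p⁻¹ * (u * dl x (act h) p) ∈ A := by
    rw [e1, mul_sub, mul_smul_comm, ← mul_assoc, ← mul_assoc p⁻¹ (u * p * u⁻¹)]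
    exact A.sub_mem (hp.cl _ E.ugA) (A.smul_mem (A.mul_mem h1 E.ugA) _)
  have h3 : p⁻¹ * dl x (act h) p ∈ A :=
    (hp.pr u E.une.mem _ (C.ore.del p hp.mem) h2).resolve_left hgood
  exact dl_eq_zero_of_left C.hlam C.lam0 C.root (C.nil' hp.mem) (C.nil' h3)
    (Or.inr (by rw [mul_inv_cancel_left₀ hp.ne]))

theorem HP.lift (C : CStep act A B x h lam fx) {p : D} (hp : HP act A p)
    (hd : dl x (act h) p = 0) : HP act B p := by
  obtain ⟨f, hf⟩ := hp.eig
  have hsp := hf.def h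
  have hp0 := hp.ne
  have H := C.ore
  set s : K := (chi f h : K) with hs
  have s0 : s ≠ 0 := Units.ne_zero _
  have e1 : x * p = s • (p * x) := by
    rw [dl_apply, hsp, sub_eq_zero, smul_mul_assoc] at hd; exact hd
  have e2 : x * p⁻¹ = s⁻¹ • (p⁻¹ * x) := by
    have : p * (x * p⁻¹) = s⁻¹ • x := by
      rw [← mul_assoc, eq_inv_smul_iff₀ s0, ← smul_mul_assoc, ← e1, mul_inv_cancel_right₀ hp0]
    rw [← mul_smul_comm, ← this, inv_mul_cancel_left₀ hp0]
  have ne : NE act B p := by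
    refine ⟨H.le hp.mem, hp0, ?_, ?_, hp.eig⟩
    · apply H.ind (P := fun a => p⁻¹ * a * p ∈ B)
      · intro a ha; exact H.le (hp.cl a ha)
      · intro a _ b _ ha hb; rw [mul_add, add_mul]; exact B.add_mem ha hb
      · intro b _ hb
        have : p⁻¹ * (b * x) * p = s • ((p⁻¹ * b * p) * x) := by
          rw [mul_assoc, mul_assoc b, e1]; simp only [mul_smul_comm, mul_assoc]
        rw [this]
        exact B.smul_mem (B.mul_mem hb H.xmem) _
    · apply H.ind (P := fun a => p * a * p⁻¹ ∈ B)
      · intro a ha; exact H.le (hp.cr a ha)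
      · intro a _ b _ ha hb; rw [mul_add, add_mul]; exact B.add_mem ha hb
      · intro b _ hb
        have : p * (b * x) * p⁻¹ = s⁻¹ • ((p * b * p⁻¹) * x) := by
          rw [mul_assoc, mul_assoc b, e2]; simp only [mul_smul_comm, mul_assoc]
        rw [this]
        exact B.smul_mem (B.mul_mem hb H.xmem) _
  refine ⟨ne, ?_, ?_⟩
  · intro hB
    apply hp.ninv
    apply H.mem_A_of_LTn_one
    apply H.deg_of_mul hp.mem hp0 hB
    rw [mul_inv_cancel₀ hp0]
    simpa using term_mem_LTn (n := 0) (x := x) A.one_mem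
  · intro a ha b hb hab
    by_contra! hcon
    obtain ⟨n, hn⟩ := H.span a ha
    obtain ⟨m, hm⟩ := H.span b hb
    obtain ⟨n1, f1, hf1, a1, ha1, w1, hw1, hpa1, hpw1, rfl⟩ := H.strip n a hn hcon.1
    obtain ⟨m1, f2, hf2, a2, ha2, w2, hw2, hpa2, hpw2, rfl⟩ := H.strip m b hm hcon.2
    have hB1 : f1 + a1 * x ^ n1 ∈ B := H.LTn_le (mem_LTn_succ.2 ⟨f1, hf1, a1, ha1, rfl⟩)
    have h1 : p⁻¹ * ((f1 + a1 * x ^ n1) * (f2 + a2 * x ^ m1)) ∈ B := by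
      have e : p⁻¹ * ((f1 + a1 * x ^ n1) * (f2 + a2 * x ^ m1)) =
          p⁻¹ * ((w1 + (f1 + a1 * x ^ n1)) * (w2 + (f2 + a2 * x ^ m1)))
          - (p⁻¹ * w1) * (w2 + (f2 + a2 * x ^ m1))
          - (p⁻¹ * (f1 + a1 * x ^ n1) * p) * (p⁻¹ * w2) := by
        have : (p⁻¹ * (f1 + a1 * x ^ n1) * p) * (p⁻¹ * w2) = p⁻¹ * ((f1 + a1 * x ^ n1) * w2) := by
          simp only [mul_assoc, mul_inv_cancel_left₀ hp0]
        rw [this]; noncomm_ring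
      rw [e]
      exact B.sub_mem (B.sub_mem hab (B.mul_mem hpw1 hb)) (B.mul_mem (ne.cl _ hB1) hpw2)
    have h2 := H.lead_mul ha1 ha2 hf1 hf2
    have hA3 := H.sigpow n1 ha2
    have h3 : p⁻¹ * (a1 * ((act h) ^ n1) a2) ∈ A := by
      apply H.coef hp.mem hp0 h2 (A.mul_mem ha1 hA3)
      rwa [sub_add_cancel]
    rcases hp.pr _ ha1 _ hA3 h3 with h4 | h4
    · exact hpa1 h4
    · apply hpa2
      have h5 := C.stab (h ^ n1)⁻¹ _ h4
      rw [← map_pow, map_mul, map_inv₀, hf.def, ← AlgEquiv.mul_apply, ← map_mul,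
        inv_mul_cancel, map_one, AlgEquiv.one_apply, Algebra.smul_def, mul_inv_rev] at h5
      rw [← map_inv₀, mul_assoc, ← Algebra.smul_def, mul_smul_comm] at h5
      have h6 := A.smul_mem h5 (chi f (h ^ n1)⁻¹ : K)
      rwa [smul_smul, mul_inv_cancel₀ (Units.ne_zero _), one_smul] at h6

end Lift


section ZPart
variable {K : Type u} [Field K] {D : Type v} [DivisionRing D] [Algebra K D] {r : ℕ}
variable {act : Torus K r →* (D ≃ₐ[K] D)} {A B : Subalgebra K D}
variable {x : D} {h : Torus K r} {lam : K} {fx : Fin r → ℤ} {g u : D} {s : K}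

theorem SD.zA (E : SD act A x h lam fx g u s) {a : D} (ha : a ∈ A) :
    u * (x - g) * a = u * act h a * u⁻¹ * (u * (x - g)) := by
  simp only [mul_assoc, inv_mul_cancel_left₀ E.une.ne, E.inn a ha]

theorem SD.xu (E : SD act A x h lam fx g u s) : (x - g) * u = s • (u * (x - g)) := by
  rw [E.inn u E.une.mem, E.su, smul_mul_assoc]

theorem SD.zu (E : SD act A x h lam fx g u s) :
    u * (x - g) * u = s • (u * (u * (x - g))) := by
  rw [mul_assoc, E.xu, mul_smul_comm]

theorem SD.xz (E : SD act A x h lam fx g u s) :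
    x * (u * (x - g)) = s • (u * (x - g) * x) := by
  have h1 : x * u = s • (u * (x - g)) + (lam * s) • (u * g) := by
    rw [← E.xu, ← E.gu]; noncomm_ring
  have h2 : (x - g) * x = (x - g) * (x - g) + lam • (g * (x - g)) := by
    rw [← E.inng]; noncomm_ring
  rw [← mul_assoc, h1, mul_assoc, h2]
  simp only [add_mul, mul_add, smul_add, smul_mul_assoc, mul_smul_comm, smul_smul, mul_assoc,
    mul_comm lam s]

theorem SD.xzpow (E : SD act A x h lam fx g u s) (n : ℕ) :
    x * (u * (x - g)) ^ n = s ^ n • ((u * (x - g)) ^ n * x) := by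
  induction n with
  | zero => simp
  | succ n ih =>
    rw [pow_succ, ← mul_assoc, ih, smul_mul_assoc, mul_assoc, E.xz, mul_smul_comm, smul_smul,
      pow_succ s, ← mul_assoc]

theorem SD.xpowz (E : SD act A x h lam fx g u s) (n : ℕ) :
    x ^ n * (u * (x - g)) = s ^ n • (u * (x - g) * x ^ n) := by
  induction n with
  | zero => simp
  | succ n ih =>
    rw [pow_succ', mul_assoc, ih, mul_smul_comm, ← mul_assoc, E.xz, smul_mul_assoc, smul_smul,
      pow_succ s, mul_assoc _ x]

theorem SD.zx (E : SD act A x h lam fx g u s) :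
    u * (x - g) * x = s⁻¹ • (x * (u * (x - g))) := by
  rw [E.xz, smul_smul, inv_mul_cancel₀ E.s0, one_smul]

theorem SD.z_eq : u * (x - g) = u * x - u * g := mul_sub _ _ _

theorem SD.xg_ne (C : CStep act A B x h lam fx) (E : SD act A x h lam fx g u s) :
    u * (x - g) ≠ 0 := by
  intro h0
  have := C.ore.lead_ne (n := 1) (f := -(u * g)) (a := u) (by
    simpa using term_mem_LTn (n := 0) (x := x) (A.neg_mem E.ugA)) E.une.mem E.une.ne
  apply this
  rw [← h0, SD.z_eq]; simp [sub_eq_add_neg, add_comm]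

theorem SD.zNE (C : CStep act A B x h lam fx) (E : SD act A x h lam fx g u s) :
    NE act B (u * (x - g)) := by
  have H := C.ore
  have z0 := E.xg_ne C
  have hu0 := E.une.ne
  refine ⟨?_, z0, ?_, ?_, ?_⟩
  · rw [SD.z_eq]
    exact B.sub_mem (B.mul_mem (H.le E.une.mem) H.xmem) (H.le E.ugA)
  · apply H.ind (P := fun a => (u * (x - g))⁻¹ * a * (u * (x - g)) ∈ B)
    · intro a ha
      have h1 := H.sigs _ (E.une.cl a ha)
      have h2 := E.zA h1
      rw [AlgEquiv.apply_symm_apply] at h2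
      have h3 : u * (u⁻¹ * a * u) * u⁻¹ = a := by
        simp only [mul_assoc, mul_inv_cancel_left₀ hu0, mul_inv_cancel₀ hu0, mul_one]
      rw [h3] at h2
      rw [mul_assoc, ← h2, inv_mul_cancel_left₀ z0]
      exact H.le h1
    · intro a _ b _ ha hb; rw [mul_add, add_mul]; exact B.add_mem ha hb
    · intro b _ hb
      have : (u * (x - g))⁻¹ * (b * x) * (u * (x - g)) =
          s • ((u * (x - g))⁻¹ * b * (u * (x - g)) * x) := by
        rw [mul_assoc, mul_assoc b, E.xz]; simp only [mul_smul_comm, mul_assoc]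
      rw [this]
      exact B.smul_mem (B.mul_mem hb H.xmem) _
  · apply H.ind (P := fun a => (u * (x - g)) * a * (u * (x - g))⁻¹ ∈ B)
    · intro a ha
      rw [E.zA ha, mul_inv_cancel_right₀ z0]
      exact H.le (E.une.cr _ (H.sig a ha))
    · intro a _ b _ ha hb; rw [mul_add, add_mul]; exact B.add_mem ha hb
    · intro b _ hb
      have e2 : x * (u * (x - g))⁻¹ = s⁻¹ • ((u * (x - g))⁻¹ * x) := by
        have : u * (x - g) * (x * (u * (x - g))⁻¹) = s⁻¹ • x := by
          rw [← mul_assoc, E.zx, smul_mul_assoc, mul_inv_cancel_right₀ z0]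
        rw [← mul_smul_comm, ← this, inv_mul_cancel_left₀ z0]
      have : u * (x - g) * (b * x) * (u * (x - g))⁻¹ =
          s⁻¹ • ((u * (x - g)) * b * (u * (x - g))⁻¹ * x) := by
        rw [mul_assoc, mul_assoc b, e2]; simp only [mul_smul_comm, mul_assoc]
      rw [this]
      exact B.smul_mem (B.mul_mem hb H.xmem) _
  · obtain ⟨f, hf⟩ := E.une.eig
    exact ⟨_, hf.mul (C.xeig.sub E.geig)⟩

theorem CStep.term_z (C : CStep act A B x h lam fx) (E : SD act A x h lam fx g u s) {q : D}
    (hq : q ∈ B) (hq0 : q ≠ 0) : q * (u * (x - g)) ∉ A := by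
  have H := C.ore
  obtain ⟨n, f, hf, a, ha, ha0, rfl⟩ := H.exists_lead hq hq0
  intro hA
  have h1 := H.lead_mul (m := 1) (g := -(u * g)) ha E.une.mem hf (by
    simpa using term_mem_LTn (n := 0) (x := x) (A.neg_mem E.ugA))
  have e : -(u * g) + u * x ^ 1 = u * (x - g) := by
    rw [SD.z_eq]; simp [sub_eq_add_neg, add_comm]
  rw [e] at h1
  have h2 : (f + a * x ^ n) * (u * (x - g)) ∈ LTn A x (n + 1) := by
    apply LTn_mono (n := 1) (by omega)
    simpa using term_mem_LTn (n := 0) (x := x) hA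
  have h3 := Submodule.sub_mem _ h2 h1
  rw [sub_sub_cancel] at h3
  have h4 := H.lead_mem (f := 0) (Submodule.zero_mem _) (A.mul_mem ha (H.sigpow n E.une.mem))
    (by simpa using h3)
  rcases mul_eq_zero.1 h4 with h5 | h5
  · exact ha0 h5
  · exact E.une.ne ((map_eq_zero_iff _ (act h ^ n).injective).1 h5)

theorem SD.ucl (E : SD act A x h lam fx g u s) {a : D} (ha : a ∈ A) : u⁻¹ * (a * u) ∈ A := by
  rw [← mul_assoc]; exact E.une.cl a ha

theorem CStep.qz_w (C : CStep act A B x h lam fx) (E : SD act A x h lam fx g u s) :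
    ∀ n, ∀ q ∈ LTn A x n, ∃ w ∈ LTn A x n, u⁻¹ * (q * (u * (x - g)) - w) ∈ B := by
  have H := C.ore
  intro n
  induction n with
  | zero => intro q hq; exact ⟨0, Submodule.zero_mem _, by rw [LTn_zero hq]; simp⟩
  | succ n ih =>
    intro q hq
    obtain ⟨q', hq', a, ha, rfl⟩ := mem_LTn_succ.1 hq
    obtain ⟨w, hw, hB⟩ := ih q' hq'
    refine ⟨w + (-(s ^ n • (a * (u * g)))) * x ^ n, mem_LTn_succ.2 ⟨w, hw, _,
      A.neg_mem (A.smul_mem (A.mul_mem ha E.ugA) _), rfl⟩, ?_⟩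
    have : u⁻¹ * ((q' + a * x ^ n) * (u * (x - g)) - (w + (-(s ^ n • (a * (u * g)))) * x ^ n)) =
      u⁻¹ * (q' * (u * (x - g)) - w) + s ^ n • (u⁻¹ * (a * u) * (x * x ^ n)) := by
      have e : a * x ^ n * (u * (x - g)) = s ^ n • (a * u * (x * x ^ n)) - s ^ n • (a * (u * g) * x ^ n) := by
        rw [mul_assoc, E.xpowz, SD.z_eq, mul_smul_comm, ← smul_sub]; congr 1; noncomm_ring
      rw [add_mul, e, neg_mul, smul_mul_assoc, mul_assoc u⁻¹, ← mul_smul_comm (s ^ n) u⁻¹, ← mul_add]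
      congr 1; abel
    rw [this]
    exact B.add_mem hB (B.smul_mem (B.mul_mem (H.le (E.ucl ha))
      (B.mul_mem H.xmem (B.pow_mem H.xmem n))) _)

theorem CStep.uz (C : CStep act A B x h lam fx) (E : SD act A x h lam fx g u s) :
    ∀ n, ∀ q ∈ LTn A x n, u⁻¹ * (q * (u * (x - g))) ∈ B → u⁻¹ * q ∈ B := by
  have H := C.ore
  intro n
  induction n with
  | zero => intro q hq _; rw [LTn_zero hq]; simp
  | succ n ih =>
    intro q hq hqz
    obtain ⟨q', hq', a, ha, rfl⟩ := mem_LTn_succ.1 hq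
    obtain ⟨w, hw, hB⟩ := C.qz_w E n q' hq'
    have hx1 := B.mul_mem H.xmem (B.pow_mem H.xmem n)
    have h1 : u⁻¹ * (w + (-(s ^ n • (a * (u * g)))) * x ^ n) ∈ B := by
      have : u⁻¹ * (w + (-(s ^ n • (a * (u * g)))) * x ^ n) =
        u⁻¹ * ((q' + a * x ^ n) * (u * (x - g))) - u⁻¹ * (q' * (u * (x - g)) - w) -
          s ^ n • (u⁻¹ * (a * u) * (x * x ^ n)) := by
        have e : a * x ^ n * (u * (x - g)) =
            s ^ n • (a * u * (x * x ^ n)) - s ^ n • (a * (u * g) * x ^ n) := by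
          rw [mul_assoc, E.xpowz, SD.z_eq, mul_smul_comm, ← smul_sub]; congr 1; noncomm_ring
        rw [add_mul, e, neg_mul, smul_mul_assoc, mul_assoc u⁻¹, ← mul_smul_comm (s ^ n) u⁻¹, ← mul_sub, ← mul_sub]
        congr 1; abel
      rw [this]
      exact B.sub_mem (B.sub_mem hqz hB) (B.smul_mem (B.mul_mem (H.le (E.ucl ha)) hx1) _)
    have h2 := H.coef E.une.mem E.une.ne hw (A.neg_mem (A.smul_mem (A.mul_mem ha E.ugA) _)) h1
    have h3 : u⁻¹ * a ∈ A := by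
      apply E.sat a ha
      have := A.smul_mem h2 (-(s ^ n)⁻¹)
      rwa [mul_neg, mul_smul_comm, smul_neg, neg_smul, neg_neg, smul_smul,
        inv_mul_cancel₀ (pow_ne_zero _ E.s0), one_smul] at this
    have h4 : u⁻¹ * (a * x ^ n) ∈ B := by
      rw [← mul_assoc]; exact B.mul_mem (H.le h3) (B.pow_mem H.xmem n)
    have h5 : u⁻¹ * (q' * (u * (x - g))) ∈ B := by
      have : u⁻¹ * (q' * (u * (x - g))) = u⁻¹ * ((q' + a * x ^ n) * (u * (x - g))) -
        u⁻¹ * (a * x ^ n) * (u * (x - g)) := by noncomm_ring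
      rw [this]
      exact B.sub_mem hqz (B.mul_mem h4 (E.zNE C).mem)
    rw [mul_add]
    exact B.add_mem (ih q' hq' h5) h4

theorem CStep.upow_z (C : CStep act A B x h lam fx) (E : SD act A x h lam fx g u s) (e : ℕ) :
    ∀ f ∈ B, (u ^ e * f) * (u * (x - g))⁻¹ ∈ B → f * (u * (x - g))⁻¹ ∈ B := by
  have H := C.ore
  have z0 := E.xg_ne C
  have hu0 := E.une.ne
  induction e with
  | zero => intro f _ h; simpa using h
  | succ e ih =>
    intro f hf hh
    have huf := B.mul_mem (H.le E.une.mem) hf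
    have h1 := ih (u * f) huf (by rwa [← mul_assoc, ← pow_succ])
    obtain ⟨n, hn⟩ := H.span _ h1
    have h2 := C.uz E n _ hn (by
      rw [inv_mul_cancel_right₀ z0, inv_mul_cancel_left₀ hu0]; exact hf)
    rwa [mul_assoc u, inv_mul_cancel_left₀ hu0] at h2

theorem CStep.red_z (C : CStep act A B x h lam fx) (E : SD act A x h lam fx g u s) :
    ∀ f ∈ B, ∃ e : ℕ, ∃ b ∈ A, ∃ q ∈ B, u ^ e * f = b + q * (u * (x - g)) := by
  have H := C.ore
  have hu0 := E.une.ne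
  have hu := E.une.mem
  apply H.ind (P := fun f => ∃ e : ℕ, ∃ b ∈ A, ∃ q ∈ B, u ^ e * f = b + q * (u * (x - g)))
  · intro a ha; exact ⟨0, a, ha, 0, B.zero_mem, by simp⟩
  · rintro f1 - f2 - ⟨e1, b1, hb1, q1, hq1, h1⟩ ⟨e2, b2, hb2, q2, hq2, h2⟩
    refine ⟨e1 + e2, u ^ e2 * b1 + u ^ e1 * b2, A.add_mem (A.mul_mem (A.pow_mem hu _) hb1)
      (A.mul_mem (A.pow_mem hu _) hb2), u ^ e2 * q1 + u ^ e1 * q2,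
      B.add_mem (B.mul_mem (B.pow_mem (H.le hu) _) hq1) (B.mul_mem (B.pow_mem (H.le hu) _) hq2), ?_⟩
    have : u ^ (e1 + e2) * (f1 + f2) = u ^ e2 * (u ^ e1 * f1) + u ^ e1 * (u ^ e2 * f2) := by
      rw [mul_add, ← mul_assoc, ← mul_assoc, ← pow_add, ← pow_add, add_comm e2]
    rw [this, h1, h2]; noncomm_ring
  · rintro f hf ⟨e, b, hb, q, hq, h1⟩
    have hb' := E.une.cr b hb
    refine ⟨e + 1, u * b * u⁻¹ * (u * g), A.mul_mem hb' E.ugA,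
      u * b * u⁻¹ + s⁻¹ • (u * (q * x)), B.add_mem (H.le hb') (B.smul_mem
        (B.mul_mem (H.le hu) (B.mul_mem hq H.xmem)) _), ?_⟩
    have e1 : u ^ (e + 1) * (f * x) = u * ((u ^ e * f) * x) := by
      rw [pow_succ']; simp only [mul_assoc]
    rw [e1, h1, add_mul, mul_assoc q, E.zx, mul_add, add_mul, ← add_assoc]
    congr 1
    · rw [SD.z_eq, ← mul_add, add_sub_cancel]
      simp only [mul_assoc, inv_mul_cancel_left₀ hu0]
    · simp only [mul_smul_comm, smul_mul_assoc, mul_assoc]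

theorem SD.zHP (C : CStep act A B x h lam fx) (E : SD act A x h lam fx g u s) :
    HP act B (u * (x - g)) := by
  have H := C.ore
  have hu0 := E.une.ne
  have hu := E.une.mem
  have hz := E.zNE C
  have z0 := hz.ne
  refine ⟨hz, ?_, ?_⟩
  · intro hB
    apply C.term_z E hB (inv_ne_zero z0)
    rw [inv_mul_cancel₀ z0]; exact A.one_mem
  · intro f1 hf1 f2 hf2 h12
    rw [hz.inv_mul_iff] at h12 ⊢
    rw [hz.inv_mul_iff]
    obtain ⟨e1, b1, hb1, q1, hq1, h1⟩ := C.red_z E f1 hf1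
    obtain ⟨e2, b2, hb2, q2, hq2, h2⟩ := C.red_z E f2 hf2
    set z := u * (x - g) with hzd
    have hun : NE act A (u ^ e2) := by
      clear h2
      induction e2 with
      | zero => simpa using NE.one
      | succ n ih => rw [pow_succ]; exact ih.mul E.une
    have hb1' := hun.cr b1 hb1
    have h3 : (b1 * f2) * z⁻¹ ∈ B := by
      have : (b1 * f2) * z⁻¹ = u ^ e1 * (f1 * f2 * z⁻¹) - q1 * (z * f2 * z⁻¹) := by
        have : b1 = u ^ e1 * f1 - q1 * z := by rw [h1]; simp
        rw [this]; noncomm_ring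
      rw [this]
      exact B.sub_mem (B.mul_mem (B.pow_mem (H.le hu) _) h12) (B.mul_mem hq1 (hz.cr _ hf2))
    have h4 : (u ^ e2 * b1 * (u ^ e2)⁻¹ * b2) * z⁻¹ ∈ B := by
      have : (u ^ e2 * b1 * (u ^ e2)⁻¹ * b2) * z⁻¹ = u ^ e2 * ((b1 * f2) * z⁻¹) -
          u ^ e2 * b1 * (u ^ e2)⁻¹ * q2 := by
        have e : b2 = u ^ e2 * f2 - q2 * z := by rw [h2]; simp
        rw [e]
        simp only [mul_sub, sub_mul, mul_assoc, mul_inv_cancel₀ z0, mul_one,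
          inv_mul_cancel_left₀ hun.ne]
      rw [this]
      exact B.sub_mem (B.mul_mem (B.pow_mem (H.le hu) _) h3) (B.mul_mem (H.le hb1') hq2)
    have h5 : u ^ e2 * b1 * (u ^ e2)⁻¹ * b2 = 0 := by
      by_contra hne
      apply C.term_z E h4 (mul_ne_zero hne (inv_ne_zero z0))
      rw [inv_mul_cancel_right₀ z0]; exact A.mul_mem hb1' hb2
    rcases mul_eq_zero.1 h5 with h6 | h6
    · left
      have hb0 : b1 = 0 := by
        have h7 := mul_eq_zero.1 h6
        rcases h7 with h7 | h7
        · exact (mul_eq_zero.1 h7).resolve_left hun.ne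
        · exact absurd h7 (inv_ne_zero hun.ne)
      apply C.upow_z E e1 f1 hf1
      rw [h1, hb0, zero_add, mul_inv_cancel_right₀ z0]; exact hq1
    · right
      apply C.upow_z E e2 f2 hf2
      rw [h2, h6, zero_add, mul_inv_cancel_right₀ z0]; exact hq2

end ZPart


section HUStep
variable {K : Type u} [Field K] {D : Type v} [DivisionRing D] [Algebra K D] {r : ℕ}
variable {act : Torus K r →* (D ≃ₐ[K] D)} {A B : Subalgebra K D}
variable {x : D} {h : Torus K r} {lam : K} {fx : Fin r → ℤ} {g u : D} {s : K}

def colonR (B : Subalgebra K D) (I : Submodule K D) (n : D) : Submodule K D :=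
  Subalgebra.toSubmodule B ⊓ I.comap (LinearMap.mulRight K n)

def colonL (B : Subalgebra K D) (I : Submodule K D) (n : D) : Submodule K D :=
  Subalgebra.toSubmodule B ⊓ I.comap (LinearMap.mulLeft K n)

theorem mem_colonR {I : Submodule K D} {n b : D} : b ∈ colonR B I n ↔ b ∈ B ∧ b * n ∈ I := Iff.rfl

theorem mem_colonL {I : Submodule K D} {n b : D} : b ∈ colonL B I n ↔ b ∈ B ∧ n * b ∈ I := Iff.rfl

theorem HId.colonR {I : Submodule K D} (hI : HId act B I) (hst : ∀ ξ, ∀ a ∈ B, act ξ a ∈ B) {n : D}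
    (hn : NE act B n) : HId act B (colonR B I n) := by
  refine ⟨fun a ha => ha.1, fun a ha b hb => ?_, fun a ha b hb => ?_, fun ξ b hb => ?_⟩
  · exact ⟨B.mul_mem ha hb.1, by
      have := hI.left a ha _ hb.2
      simpa [mul_assoc] using this⟩
  · refine mem_colonR.2 ⟨B.mul_mem hb.1 ha, ?_⟩
    have := hI.right _ (hn.cl a ha) _ (mem_colonR.1 hb).2
    simpa only [mul_assoc, mul_inv_cancel_left₀ hn.ne] using this
  · refine mem_colonR.2 ⟨hst ξ b hb.1, ?_⟩
    have := hI.st ξ _ (mem_colonR.1 hb).2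
    obtain ⟨f, hf⟩ := hn.eig
    rw [map_mul, hf.def, mul_smul_comm] at this
    have h2 := I.smul_mem (chi f ξ : K)⁻¹ this
    rwa [smul_smul, inv_mul_cancel₀ (Units.ne_zero _), one_smul] at h2

theorem HId.colonL {I : Submodule K D} (hI : HId act B I) (hst : ∀ ξ, ∀ a ∈ B, act ξ a ∈ B) {n : D}
    (hn : NE act B n) : HId act B (colonL B I n) := by
  refine ⟨fun a ha => ha.1, fun a ha b hb => ?_, fun a ha b hb => ?_, fun ξ b hb => ?_⟩
  · refine mem_colonL.2 ⟨B.mul_mem ha hb.1, ?_⟩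
    have := hI.left _ (hn.cr a ha) _ (mem_colonL.1 hb).2
    simpa only [mul_assoc, inv_mul_cancel_left₀ hn.ne] using this
  · refine mem_colonL.2 ⟨B.mul_mem hb.1 ha, ?_⟩
    have := hI.right a ha _ (mem_colonL.1 hb).2
    simpa only [mul_assoc] using this
  · refine mem_colonL.2 ⟨hst ξ b hb.1, ?_⟩
    have := hI.st ξ _ (mem_colonL.1 hb).2
    obtain ⟨f, hf⟩ := hn.eig
    rw [map_mul, hf.def, smul_mul_assoc] at this
    have h2 := I.smul_mem (chi f ξ : K)⁻¹ this
    rwa [smul_smul, inv_mul_cancel₀ (Units.ne_zero _), one_smul] at h2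

theorem HId.restrict {I : Submodule K D} (hI : HId act B I) (hAB : A ≤ B)
    (hst : ∀ ξ, ∀ a ∈ A, act ξ a ∈ A) : HId act A (Subalgebra.toSubmodule A ⊓ I) := by
  refine ⟨fun a ha => ha.1, fun a ha b hb => ?_, fun a ha b hb => ?_, fun ξ b hb => ?_⟩
  · exact ⟨A.mul_mem ha hb.1, hI.left a (hAB ha) b hb.2⟩
  · exact ⟨A.mul_mem hb.1 ha, hI.right a (hAB ha) b hb.2⟩
  · exact ⟨hst ξ b hb.1, hI.st ξ b hb.2⟩

theorem NE.pow {p : D} (hp : NE act A p) (n : ℕ) : NE act A (p ^ n) := by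
  induction n with
  | zero => simpa using NE.one
  | succ n ih => rw [pow_succ]; exact ih.mul hp

/-- clearing denominators -/
theorem CStep.clear (C : CStep act A B x h lam fx) (E : SD act A x h lam fx g u s) :
    ∀ f ∈ B, ∃ e n : ℕ, u ^ e * f ∈ LTn A (u * (x - g)) n := by
  have H := C.ore
  have hu0 := E.une.ne
  have hu := E.une.mem
  have key : ∀ n, ∀ F ∈ LTn A (u * (x - g)) n, u * (F * x) ∈ LTn A (u * (x - g)) (n + 1) := by
    intro n
    induction n with
    | zero => intro F hF; rw [LTn_zero hF]; simp
    | succ n ih =>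
      intro F hF
      obtain ⟨F', hF', b, hb, rfl⟩ := mem_LTn_succ.1 hF
      rw [add_mul, mul_add]
      refine Submodule.add_mem _ (LTn_mono (by omega) (ih F' hF')) ?_
      have hb' := E.une.cr b hb
      have e1 : (u * (x - g)) ^ n * x = (s ^ n)⁻¹ • (x * (u * (x - g)) ^ n) := by
        rw [E.xzpow, smul_smul, inv_mul_cancel₀ (pow_ne_zero _ E.s0), one_smul]
      have e2 : u * (b * (u * (x - g)) ^ n * x) = (s ^ n)⁻¹ •
          ((u * b * u⁻¹) * (u * (x - g)) ^ (n + 1) + (u * b * u⁻¹ * (u * g)) * (u * (x - g)) ^ n) := by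
        rw [mul_assoc b, e1, mul_smul_comm, mul_smul_comm]
        congr 1
        have : u * (b * (x * (u * (x - g)) ^ n)) = (u * b * u⁻¹) * ((u * (x - g) + u * g) * (u * (x - g)) ^ n) := by
          rw [← mul_add, sub_add_cancel]
          simp only [mul_assoc, inv_mul_cancel_left₀ hu0]
        rw [this, add_mul, mul_add, ← pow_succ', mul_assoc _ (u * g)]
      rw [e2]
      exact Submodule.smul_mem _ _ (Submodule.add_mem _ (term_mem_LTn hb')
        (LTn_mono (by omega) (term_mem_LTn (A.mul_mem hb' E.ugA))))
  apply H.ind (P := fun f => ∃ e n : ℕ, u ^ e * f ∈ LTn A (u * (x - g)) n)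
  · intro a ha; exact ⟨0, 1, by simpa using term_mem_LTn (n := 0) (x := u * (x - g)) ha⟩
  · rintro f1 - f2 - ⟨e1, n1, h1⟩ ⟨e2, n2, h2⟩
    refine ⟨e1 + e2, n1 + n2, ?_⟩
    have : u ^ (e1 + e2) * (f1 + f2) = u ^ e2 * (u ^ e1 * f1) + u ^ e1 * (u ^ e2 * f2) := by
      rw [mul_add, ← mul_assoc, ← mul_assoc, ← pow_add, ← pow_add, add_comm e2]
    rw [this]
    exact Submodule.add_mem _ (LTn_mono (by omega) (LTn_mul_left (A.pow_mem hu _) h1))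
      (LTn_mono (by omega) (LTn_mul_left (A.pow_mem hu _) h2))
  · rintro f - ⟨e, n, h1⟩
    refine ⟨e + 1, n + 1, ?_⟩
    have e1 : u ^ (e + 1) * (f * x) = u * ((u ^ e * f) * x) := by
      rw [pow_succ']; simp only [mul_assoc]
    rw [e1]
    exact key n _ h1

theorem SD.zupow (E : SD act A x h lam fx g u s) (j : ℕ) :
    (u * (x - g)) ^ j * u = s ^ j • (u * (u * (x - g)) ^ j) := by
  induction j with
  | zero => simp
  | succ j ih =>
    rw [pow_succ, mul_assoc, E.zu, mul_smul_comm, ← mul_assoc, ih, smul_mul_assoc, smul_smul,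
      pow_succ' s, mul_assoc u]

theorem CStep.sigz (C : CStep act A B x h lam fx) (E : SD act A x h lam fx g u s) :
    act h (u * (x - g)) = (s * lam) • (u * (x - g)) := by
  rw [map_mul, map_sub, E.su, C.hlam, E.geig.def, C.lam_eq, ← smul_sub, smul_mul_assoc,
    mul_smul_comm, smul_smul]

theorem CStep.term (C : CStep act A B x h lam fx) (E : SD act A x h lam fx g u s) {b : D}
    (hb : b ∈ A) (N j : ℕ) :
    lam ^ N • (u * (x - g) * (b * (u * (x - g)) ^ j) * u) -
      s • (u * act h (b * (u * (x - g)) ^ j) * (u * (x - g))) =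
    (s ^ (j + 1) * (lam ^ N - lam ^ j)) • (u * act h b * (u * (x - g)) ^ (j + 1)) := by
  have e1 : u * (x - g) * (b * (u * (x - g)) ^ j) * u =
      s ^ (j + 1) • (u * act h b * (u * (x - g)) ^ (j + 1)) := by
    rw [← mul_assoc, E.zA hb, mul_assoc _ (u * (x - g)), ← pow_succ', mul_assoc, E.zupow,
      mul_smul_comm]
    simp only [mul_assoc, inv_mul_cancel_left₀ E.une.ne]
  have e2 : u * act h (b * (u * (x - g)) ^ j) * (u * (x - g)) =
      (s ^ j * lam ^ j) • (u * act h b * (u * (x - g)) ^ (j + 1)) := by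
    rw [map_mul, map_pow, C.sigz E, smul_pow, mul_pow, mul_smul_comm, mul_smul_comm,
      smul_mul_assoc, pow_succ]
    simp only [mul_assoc]
  rw [e1, e2, smul_smul, smul_smul, ← sub_smul]
  congr 1; ring

theorem CStep.isolate (C : CStep act A B x h lam fx) (E : SD act A x h lam fx g u s)
    {I : Submodule K D} (hI : HId act B I) : ∀ (n k : ℕ) (b : ℕ → D), (∀ i, b i ∈ A) →
    (∃ i < n, b i ≠ 0) → ∑ i ∈ Finset.range n, b i * (u * (x - g)) ^ (i + k) ∈ I →
    ∃ a ∈ A, a ≠ 0 ∧ ∃ m : ℕ, a * (u * (x - g)) ^ m ∈ I := by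
  have hz := E.zNE C
  have H := C.ore
  intro n
  induction n with
  | zero => rintro k b _ ⟨i, hi, _⟩; omega
  | succ n ih =>
    intro k b hb hne hsum
    by_cases hall : ∃ i < n, b i ≠ 0
    · apply ih (k + 1) (fun i => (s ^ (i + k + 1) * (lam ^ (n + k) - lam ^ (i + k))) • (u * act h (b i)))
      · intro i
        exact A.smul_mem (A.mul_mem E.une.mem (H.sig _ (hb i))) _
      · obtain ⟨i, hi, hbi⟩ := hall
        refine ⟨i, hi, smul_ne_zero (mul_ne_zero (pow_ne_zero _ E.s0) ?_) (mul_ne_zero E.une.ne ?_)⟩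
        · intro h0
          apply C.root (n - i) (by omega)
          have e : n + k = (n - i) + (i + k) := by omega
          rw [sub_eq_zero, e, pow_add] at h0
          exact mul_right_cancel₀ (pow_ne_zero (i + k) C.lam0) (by rw [h0, one_mul])
        · exact fun h0 => hbi ((map_eq_zero_iff _ (act h).injective).1 h0)
      · have hF : lam ^ (n + k) • (u * (x - g) * (∑ i ∈ Finset.range (n + 1), b i * (u * (x - g)) ^ (i + k)) * u) -
            s • (u * act h (∑ i ∈ Finset.range (n + 1), b i * (u * (x - g)) ^ (i + k)) * (u * (x - g))) ∈ I := by
          apply I.sub_mem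
          · exact I.smul_mem _ (hI.right _ (H.le E.une.mem) _ (hI.left _ hz.mem _ hsum))
          · exact I.smul_mem _ (hI.right _ hz.mem _ (hI.left _ (H.le E.une.mem) _ (hI.st h _ hsum)))
        rw [Finset.mul_sum, Finset.sum_mul, Finset.smul_sum, map_sum, Finset.mul_sum,
          Finset.sum_mul, Finset.smul_sum, ← Finset.sum_sub_distrib,
          Finset.sum_congr rfl (fun i _ => C.term E (hb i) (n + k) (i + k)),
          Finset.sum_range_succ] at hF
        simpa [smul_mul_assoc, add_assoc] using hF
    · push Not at hall
      obtain ⟨i, hi, hbi⟩ := hne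
      have hin : i = n := by
        by_contra hin
        exact hbi (hall i (by omega))
      subst hin
      refine ⟨b i, hb i, hbi, i + k, ?_⟩
      rw [Finset.sum_range_succ, Finset.sum_eq_zero, zero_add] at hsum
      · exact hsum
      · intro j hj
        rw [hall j (Finset.mem_range.1 hj), zero_mul]

theorem CStep.uzpow (C : CStep act A B x h lam fx) (E : SD act A x h lam fx g u s)
    {I : Submodule K D} (hI : HId act B I) : ∀ (e j : ℕ), u ^ e * (u * (x - g)) ^ j ∈ I →
    (u * (x - g)) ^ (e + j) ∈ I := by
  have H := C.ore
  intro e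
  induction e with
  | zero => intro j hj; simpa using hj
  | succ e ih =>
    intro j hj
    have e1 : e + 1 + j = e + (j + 1) := by omega
    rw [e1]
    apply ih
    set w := (u * (x - g)) ^ j with hw
    have hxu : ∀ n : ℕ, (x - g) * u ^ n = s ^ n • (u ^ n * (x - g)) := by
      intro n
      induction n with
      | zero => simp
      | succ n ih =>
        rw [pow_succ, ← mul_assoc, ih, smul_mul_assoc, mul_assoc, E.xu, mul_smul_comm, smul_smul,
          pow_succ s, mul_assoc]
    have hgu : ∀ n : ℕ, g * u ^ n = (lam * s) ^ n • (u ^ n * g) := by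
      intro n
      induction n with
      | zero => simp
      | succ n ih =>
        rw [pow_succ, ← mul_assoc, ih, smul_mul_assoc, mul_assoc, E.gu, mul_smul_comm, smul_smul,
          pow_succ (lam * s), mul_assoc]
    have h1 : u ^ e * (u * (x - g)) * w + lam ^ (e + 1) • (u ^ e * (u * g) * w) ∈ I := by
      have h2 := I.smul_mem (s ^ (e + 1))⁻¹ (hI.left x H.xmem _ hj)
      have e2 : x * (u ^ (e + 1) * w) = s ^ (e + 1) •
          (u ^ e * (u * (x - g)) * w + lam ^ (e + 1) • (u ^ e * (u * g) * w)) := by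
        have : x * u ^ (e + 1) = (x - g) * u ^ (e + 1) + g * u ^ (e + 1) := by noncomm_ring
        rw [← mul_assoc, this, hxu, hgu, add_mul, smul_add, smul_smul, mul_pow, smul_mul_assoc,
          smul_mul_assoc, mul_comm (lam ^ (e + 1)), pow_succ u, mul_assoc (u ^ e) u,
          mul_assoc (u ^ e) u]
      rwa [e2, smul_smul, inv_mul_cancel₀ (pow_ne_zero _ E.s0), one_smul] at h2
    have h3 : u ^ e * (u * (x - g)) * w + u ^ e * (u * g) * w ∈ I := by
      have h2 := I.smul_mem (s ^ j) (hI.right x H.xmem _ hj)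
      have e2 : s ^ j • (u ^ (e + 1) * w * x) =
          u ^ e * (u * (x - g)) * w + u ^ e * (u * g) * w := by
        rw [mul_assoc, ← mul_smul_comm, ← E.xzpow, ← hw, pow_succ]
        noncomm_ring
      rwa [e2] at h2
    have h4 := I.smul_mem (lam ^ (e + 1) - 1)⁻¹ (I.sub_mem (I.smul_mem (lam ^ (e + 1)) h3) h1)
    rw [smul_add, add_sub_add_right_eq_sub, ← one_smul K (u ^ e * (u * (x - g)) * w), smul_smul,
      mul_one, ← sub_smul, smul_smul, inv_mul_cancel₀ (sub_ne_zero.2 (C.root _ (by omega))),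
      one_smul] at h4
    rw [pow_succ', ← mul_assoc]
    exact h4

theorem HU.step (C : CStep act A B x h lam fx) (E : SD act A x h lam fx g u s)
    (hU : HU act A) : HU act B := by
  have H := C.ore
  have hz := E.zNE C
  have zHP := E.zHP C
  have key : ∀ (k : ℕ) (I : Submodule K D), HId act B I → ∀ l : List D, l.length = k →
      (∀ p ∈ l, HP act A p) → l.prod ∈ I → ∃ l' : List D, (∀ p ∈ l', HP act B p) ∧ l'.prod ∈ I := by
    intro k
    induction k with
    | zero =>
      intro I _ l hl _ hI
      rw [List.length_eq_zero_iff] at hl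
      subst hl
      exact ⟨[], by simp, hI⟩
    | succ k ih =>
      intro I hI l hlen hl hlI
      by_cases hgood : ∃ p ∈ l, p⁻¹ * u ∉ A
      · obtain ⟨p, hp, hpu⟩ := hgood
        obtain ⟨l1, hl1, hlen1, e⟩ := HP.front hl hp
        have hpB := (hl p hp).lift C (E.dlp C (hl p hp) hpu)
        obtain ⟨l', hl', hI'⟩ := ih (colonL B I p) (hI.colonL C.stabB hpB.toNE) l1 (by omega) hl1
          (mem_colonL.2 ⟨H.le (NE.prod hl1).mem, by rwa [← e]⟩)
        exact ⟨p :: l', by simpa using ⟨hpB, hl'⟩, by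
          rw [List.prod_cons]; exact (mem_colonL.1 hI').2⟩
      · push Not at hgood
        have hb : ∀ l : List D, (∀ p ∈ l, p⁻¹ * u ∈ A) → l.prod⁻¹ * u ^ l.length ∈ A := by
          intro l
          induction l with
          | nil => intro _; simp
          | cons p l ih =>
            intro hp
            have hn := E.une.pow l.length
            have h1 := ih fun q hq => hp q (by simp [hq])
            have h2 := hn.cl _ (hp p (by simp))
            have h3 := A.mul_mem h1 h2
            rw [List.prod_cons, mul_inv_rev, List.length_cons, pow_succ']
            simpa only [mul_assoc, mul_inv_cancel_left₀ hn.ne] using h3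
        have h1 : u ^ l.length ∈ I := by
          have := hI.right _ (H.le (hb l hgood)) _ hlI
          rwa [mul_inv_cancel_left₀ (NE.prod hl).ne] at this
        have h2 := C.uzpow E hI l.length 0 (by simpa using h1)
        exact ⟨List.replicate (l.length + 0) (u * (x - g)), fun p hp => by
          rw [List.eq_of_mem_replicate hp]; exact zHP, by rw [List.prod_replicate]; exact h2⟩
  rintro I hI ⟨f, hf, hf0⟩
  obtain ⟨e, n, b, hb, hfb⟩ := C.clear E f (hI.le f hf)
  have h1 : ∑ i ∈ Finset.range n, b i * (u * (x - g)) ^ (i + 0) ∈ I := by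
    have := hI.left _ (H.le (A.pow_mem E.une.mem e)) f hf
    rw [hfb] at this
    simpa using this
  have h2 : ∃ i < n, b i ≠ 0 := by
    by_contra! h0
    rw [Finset.sum_eq_zero (fun i hi => by rw [h0 i (Finset.mem_range.1 hi), zero_mul])] at hfb
    exact mul_ne_zero (pow_ne_zero _ E.une.ne) hf0 hfb
  obtain ⟨a, ha, ha0, m, ham⟩ := C.isolate E hI n 0 b hb h2 h1
  have hJ := hI.colonR C.stabB (hz.pow m)
  obtain ⟨l, hl, hlJ⟩ := hU _ (hJ.restrict H.le C.stab)
    ⟨a, ⟨ha, mem_colonR.2 ⟨H.le ha, ham⟩⟩, ha0⟩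
  obtain ⟨l', hl', hlJ'⟩ := key _ _ hJ l rfl hl hlJ.2
  refine ⟨l' ++ List.replicate m (u * (x - g)), ?_, ?_⟩
  · intro p hp
    rcases List.mem_append.1 hp with hp | hp
    · exact hl' p hp
    · rw [List.eq_of_mem_replicate hp]; exact zHP
  · rw [List.prod_append, List.prod_replicate]; exact (mem_colonR.1 hlJ').2

end HUStep


section Final
variable {K : Type u} [Field K] {R : Type v} [Ring R] [Algebra K R] {N r : ℕ}
variable {D : Type v} [DivisionRing D] [Algebra K D]

theorem OreStep.mapι {A B : Subalgebra K R} {x : R} {σ : R ≃ₐ[K] R} (H : OreStep A B x σ)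
    (ι : R →ₐ[K] D) (hι : Function.Injective ι) (τ : D ≃ₐ[K] D) (hτ : ∀ a, τ (ι a) = ι (σ a)) :
    OreStep (A.map ι) (B.map ι) (ι x) τ := by
  refine ⟨Subalgebra.map_mono H.le, ⟨x, H.xmem, rfl⟩, ?_, ?_, ?_, ?_, ?_⟩
  · rintro _ ⟨a, ha, rfl⟩
    exact ⟨σ a, H.sig a ha, (hτ a).symm⟩
  · rintro _ ⟨a, ha, rfl⟩
    refine ⟨σ.symm a, H.sigs a ha, ?_⟩
    apply τ.injective
    change τ (ι _) = τ (τ.symm (ι a))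
    rw [hτ, AlgEquiv.apply_symm_apply, AlgEquiv.apply_symm_apply]
  · rintro _ ⟨a, ha, rfl⟩
    refine ⟨x * a - σ a * x, H.del a ha, ?_⟩
    change ι (x * a - σ a * x) = ι x * ι a - τ (ι a) * ι x
    rw [hτ]; simp
  · rintro _ ⟨b, hb, rfl⟩
    obtain ⟨n, a, ha, e⟩ := H.span b hb
    refine ⟨n, fun i => ι (a i), fun i => ⟨a i, ha i, rfl⟩, ?_⟩
    change ι b = _
    rw [e]; simp
  · intro n a ha h0
    choose b hb hba using ha
    have hba' : ∀ i, a i = ι (b i) := fun i => (hba i).symm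
    have h1 : ∑ i ∈ Finset.range n, b i * x ^ i = 0 := by
      apply hι
      rw [map_zero, ← h0]; simp [hba']
    intro i hi
    rw [hba', H.indep n b hb h1 i hi, map_zero]

theorem noeth_map (A : Subalgebra K R) (hA : IsNoetherianRing A) (ι : R →ₐ[K] D) :
    IsNoetherianRing (A.map ι) := by
  refine isNoetherianRing_of_surjective A (A.map ι)
    (((ι.comp A.val).codRestrict (A.map ι) fun a => ⟨a, a.2, rfl⟩).toRingHom) ?_
  rintro ⟨_, a, ha, rfl⟩
  exact ⟨⟨a, ha⟩, rfl⟩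

theorem QNA.cstep (Q : QNA K R N r) (ι : R →ₐ[K] D) (hι : Function.Injective ι)
    (actD : Torus K r →* (D ≃ₐ[K] D)) (hact : ∀ ξ a, actD ξ (ι a) = ι (Q.act ξ a)) (k : Fin N) :
    ∃ fx, CStep actD ((Rsub K Q.x k).map ι) ((Rsub K Q.x ((k : ℕ) + 1)).map ι) (ι (Q.x k)) (Q.h k)
      (Q.lam k) fx := by
  obtain ⟨fx, hfx⟩ := Q.eigenvec k
  refine ⟨fx, (Q.oreStep k).mapι ι hι _ (hact _), ?_, ?_, ?_, ?_, Q.lam_not_root k, ?_, ?_, ?_⟩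
  · intro ξ
    rw [hact, hfx ξ, map_smul]
  · rintro ξ _ ⟨a, ha, rfl⟩
    exact ⟨_, Rsub_act Q _ ξ ha, (hact ξ a).symm⟩
  · rintro ξ _ ⟨a, ha, rfl⟩
    exact ⟨_, Rsub_act Q _ ξ ha, (hact ξ a).symm⟩
  · rw [hact, Q.hx, map_smul]
  · rintro _ ⟨a, ha, rfl⟩
    obtain ⟨n, hn⟩ := Q.locnil k a ha
    refine ⟨n, ?_⟩
    have : ∀ n b, (fun a => ι (Q.x k) * a - actD (Q.h k) a * ι (Q.x k))^[n] (ι b) =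
        ι ((skewDelta K Q.act Q.x Q.h k)^[n] b) := by
      intro n
      induction n with
      | zero => intro b; rfl
      | succ n ih =>
        intro b
        rw [Function.iterate_succ_apply, Function.iterate_succ_apply, ← ih]
        congr 1
        simp [skewDelta, hact]
    have h2 := this n a
    rw [hn, map_zero] at h2
    exact h2
  · exact noeth_map _ (Q.noethR _ k.2.le) ι
  · exact noeth_map _ (Q.noethR _ k.2) ι

theorem QNA.HU_all (Q : QNA K R N r) (ι : R →ₐ[K] D) (hι : Function.Injective ι)
    (actD : Torus K r →* (D ≃ₐ[K] D)) (hact : ∀ ξ a, actD ξ (ι a) = ι (Q.act ξ a)) (n : ℕ)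
    (hn : n ≤ N) : (∃ S, Good actD ((Rsub K Q.x n).map ι) S) ∧ HU actD ((Rsub K Q.x n).map ι) := by
  induction n with
  | zero =>
    have : (Rsub K Q.x 0).map ι = ⊥ := by
      have : Rsub K Q.x 0 = ⊥ := by simp [Rsub]
      rw [this, Algebra.map_bot]
    rw [this]
    exact ⟨⟨_, Good.base⟩, HU.base⟩
  | succ n ih =>
    obtain ⟨⟨S, G⟩, hU⟩ := ih (by omega)
    obtain ⟨fx, C⟩ := Q.cstep ι hι actD hact ⟨n, hn⟩
    obtain ⟨g, u, s, E⟩ := C.exists_SD G hU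
    exact ⟨G.step C, HU.step C E hU⟩

theorem QNA.main (Q : QNA K R N r) (P : TwoSidedIdeal R) (hP0 : P ≠ ⊥) (hP : P.IsPrimeTS)
    (hPH : TwoSidedIdeal.IsHInvariant K Q.act P) :
    ∃ p ∈ P, IsPrimeIn K (⊤ : Subalgebra K R) p ∧
        ∃ f : Fin r → ℤ, IsEigenWith K Q.act f p := by
  have := Q.isNoetherian
  have := Q.isDomain
  obtain ⟨D, i1, i2, ι, actD, hι, hact⟩ := exists_div_act Q.act
  obtain ⟨-, hU⟩ := Q.HU_all ι hι actD hact N le_rfl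
  rw [Rsub_top] at hU
  set T : Subalgebra K D := (⊤ : Subalgebra K R).map ι with hT
  have hTmem : ∀ d, d ∈ T ↔ ∃ a, ι a = d := fun d =>
    ⟨fun ⟨a, _, h⟩ => ⟨a, h⟩, fun ⟨a, h⟩ => ⟨a, trivial, h⟩⟩
  let I : Submodule K D :=
    { carrier := {d | ∃ a ∈ P, ι a = d}
      zero_mem' := ⟨0, P.zero_mem, map_zero _⟩
      add_mem' := by
        rintro _ _ ⟨a, ha, rfl⟩ ⟨b, hb, rfl⟩
        exact ⟨a + b, P.add_mem ha hb, map_add _ _ _⟩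
      smul_mem' := by
        rintro c _ ⟨a, ha, rfl⟩
        refine ⟨c • a, ?_, map_smul _ _ _⟩
        rw [Algebra.smul_def]; exact P.mul_mem_left _ _ ha }
  have hmemI : ∀ a, ι a ∈ I ↔ a ∈ P := fun a =>
    ⟨fun ⟨b, hb, e⟩ => by rwa [← hι e], fun h => ⟨a, h, rfl⟩⟩
  have hI : HId actD T I := by
    refine ⟨?_, ?_, ?_, ?_⟩
    · rintro _ ⟨a, _, rfl⟩; exact ⟨a, trivial, rfl⟩
    · rintro _ ⟨a, _, rfl⟩ _ ⟨b, hb, rfl⟩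
      exact ⟨a * b, P.mul_mem_left _ _ hb, map_mul _ _ _⟩
    · rintro _ ⟨a, _, rfl⟩ _ ⟨b, hb, rfl⟩
      exact ⟨b * a, P.mul_mem_right _ _ hb, map_mul _ _ _⟩
    · rintro ξ _ ⟨b, hb, rfl⟩
      exact ⟨_, hPH ξ b hb, (hact ξ b).symm⟩
  have hne : ∃ b ∈ I, b ≠ 0 := by
    by_contra! hcon
    apply hP0
    rw [eq_bot_iff]
    intro a ha
    rw [TwoSidedIdeal.mem_bot]
    apply hι
    rw [map_zero]
    exact hcon _ ((hmemI a).2 ha)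
  obtain ⟨l, hl, hlI⟩ := hU I hI hne
  have key : ∀ l : List D, (∀ p ∈ l, HP actD T p) → l.prod ∈ I → ∃ p ∈ I, HP actD T p := by
    intro l
    induction l with
    | nil =>
      intro _ h1
      exfalso
      apply hP.1
      rw [List.prod_nil, ← map_one ι, hmemI] at h1
      rw [eq_top_iff]
      intro a _
      simpa using P.mul_mem_left a 1 h1
    | cons p l ih =>
      intro hl h1
      have hp := hl p (by simp)
      obtain ⟨p0, hp0⟩ := (hTmem p).1 hp.mem
      obtain ⟨q0, hq0⟩ := (hTmem _).1 (NE.prod (fun q hq => hl q (by simp [hq]) :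
        ∀ q ∈ l, HP actD T q)).mem
      rcases hP.2 p0 q0 (by
        intro t
        rw [← hmemI, map_mul, map_mul, hp0, hq0]
        have h2 := hI.left _ (hp.cr (ι t) ((hTmem _).2 ⟨t, rfl⟩)) _ h1
        rw [List.prod_cons] at h2
        simpa only [mul_assoc, inv_mul_cancel_left₀ hp.ne] using h2) with h3 | h3
      · exact ⟨p, by rw [← hp0, hmemI]; exact h3, hp⟩
      · exact ih (fun q hq => hl q (by simp [hq])) (by rw [← hq0, hmemI]; exact h3)
  obtain ⟨_, ⟨p, hpP, rfl⟩, hp⟩ := key l hl hlI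
  have hdiv : ∀ a, (ι p)⁻¹ * ι a ∈ T ↔ ∃ d, a = p * d := by
    intro a
    rw [hTmem]
    constructor
    · rintro ⟨d, hd⟩
      refine ⟨d, hι ?_⟩
      rw [map_mul, hd, mul_inv_cancel_left₀ hp.ne]
    · rintro ⟨d, rfl⟩
      exact ⟨d, by rw [map_mul, inv_mul_cancel_left₀ hp.ne]⟩
  have hιT : ∀ a, ι a ∈ T := fun a => (hTmem _).2 ⟨a, rfl⟩
  refine ⟨p, hpP, ⟨trivial, ?_, ?_, ?_, ?_, ?_⟩, ?_⟩
  · rintro rfl; exact hp.ne (map_zero _)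
  · rintro ⟨w, _, hw, _⟩
    apply hp.ninv
    have := congrArg ι hw
    rw [map_mul, map_one] at this
    rw [inv_eq_of_mul_eq_one_right this]; exact hιT w
  · intro a _
    obtain ⟨b, hb⟩ := (hTmem _).1 (hp.cl _ (hιT a))
    refine ⟨b, trivial, hι ?_⟩
    rw [map_mul, map_mul, hb, mul_assoc, mul_inv_cancel_left₀ hp.ne]
  · intro a _
    obtain ⟨b, hb⟩ := (hTmem _).1 (hp.cr _ (hιT a))
    refine ⟨b, trivial, hι ?_⟩
    rw [map_mul, map_mul, hb, inv_mul_cancel_right₀ hp.ne]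
  · rintro a _ b _ ⟨d, _, hd⟩
    have h1 := hp.pr _ (hιT a) _ (hιT b) (by rw [← map_mul, hdiv]; exact ⟨d, hd⟩)
    rw [hdiv, hdiv] at h1
    exact h1.imp (fun ⟨d, hd⟩ => ⟨d, trivial, hd⟩) (fun ⟨d, hd⟩ => ⟨d, trivial, hd⟩)
  · obtain ⟨f, hf⟩ := hp.eig
    refine ⟨f, fun ξ => hι ?_⟩
    rw [← hact, hf ξ, map_smul]

end Final

/-- **Quantum nilpotent algebras are noetherian `H`-UFDs.**
Every quantum nilpotent algebra `R` of dimension `N` over a field `K` is a noetherian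
domain, and every nonzero `H`-invariant prime (two-sided) ideal of `R` contains a prime
element which is an `H`-eigenvector. -/
theorem quantum_nilpotent_algebra_is_HUFD
    {K : Type u} [Field K] {R : Type v} [Ring R] [Algebra K R] {N r : ℕ}
    (Q : QNA K R N r) :
    IsNoetherianRing R ∧ IsDomain R ∧
    ∀ P : TwoSidedIdeal R, P ≠ ⊥ → P.IsPrimeTS →
      TwoSidedIdeal.IsHInvariant K Q.act P →
      ∃ p ∈ P, IsPrimeIn K (⊤ : Subalgebra K R) p ∧
        ∃ f : Fin r → ℤ, IsEigenWith K Q.act f p := by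
  exact ⟨Q.isNoetherian, Q.isDomain, fun P h0 h1 h2 => Q.main P h0 h1 h2⟩
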